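/- arXiv:2210.14654 — 2 statements merged into one kernel-verified Lean document; each statement's English description precedes it below -/
import Mathlib

section
/- Let N ≥ 2, T > 0, M ≥ 1, 1 ≤ q < ∞, and p ∈ (Nq/(N−1), ∞]. Assume v ∈ X_{T,M}. Then for p ∈ (Nq/(N−1), ∞) there exists C > 0, independent of T and M, such that ‖F[v](·,t)‖_{L^p(ℝ^N_+)} ≤ C (1 + t^{1/p}) t^{−1/2} e^{Mt} ‖v‖_{X_{T,M}} for all 0 < t < T. -/
open MeasureTheory Real Set ENNReal

noncomputable section

abbrev E' (N : ℕ) := EuclideanSpace ℝ (Fin (N - 1))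
abbrev HS (N : ℕ) := E' N × ℝ

/-- The half-space `ℝ^N_+ = ℝ^{N-1} × (0,∞)`. -/
def halfSpace (N : ℕ) : Set (HS N) := {x | 0 < x.2}

/-- The closed half-space `closure(ℝ^N_+)`. -/
def closedHalfSpace (N : ℕ) : Set (HS N) := {x | 0 ≤ x.2}

/-- The Dirichlet heat kernel on the half-space. -/
def GammaD (N : ℕ) (x y : HS N) (t : ℝ) : ℝ :=
  (4 * π * t) ^ (-(N : ℝ) / 2) *
    (Real.exp (-(‖x.1 - y.1‖ ^ 2 + (x.2 - y.2) ^ 2) / (4 * t)) -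
      Real.exp (-(‖x.1 - y.1‖ ^ 2 + (x.2 + y.2) ^ 2) / (4 * t)))

/-- The Dirichlet heat semigroup on the half-space. -/
def S1 (N : ℕ) (t : ℝ) (φ : HS N → ℝ) (x : HS N) : ℝ :=
  ∫ y in halfSpace N, GammaD N x y t * φ y

/-- The normalizing constant `C_N` for the kernel `P`. -/
def PC (N : ℕ) : ℝ :=
  (∫ z : E' N, (1 + ‖z‖ ^ 2) ^ (-(N : ℝ) / 2))⁻¹

/-- The kernel `P(x',x_N,t) = C_N (x_N+t)^{1-N} (1+|x'/(x_N+t)|²)^{-N/2}`. -/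
def Pker (N : ℕ) (x' : E' N) (xN t : ℝ) : ℝ :=
  PC N * (xN + t) ^ ((1 : ℝ) - N) * (1 + ‖x'‖ ^ 2 / (xN + t) ^ 2) ^ (-(N : ℝ) / 2)

/-- The semigroup `[S_2(t)ψ](x) = ∫_{ℝ^{N-1}} P(x'-y',x_N,t) ψ(y') dy'`. -/
def S2 (N : ℕ) (t : ℝ) (ψ : E' N → ℝ) (x : HS N) : ℝ :=
  ∫ y' : E' N, Pker N (x.1 - y') x.2 t * ψ y'

/-- The normal derivative `∂_{x_N} v` of a space-time function `v`. -/
def dN (N : ℕ) (v : HS N → ℝ → ℝ) (x : HS N) (t : ℝ) : ℝ :=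
  deriv (fun s => v (x.1, s) t) x.2

/-- The nonlocal operator
`F[v](x,t) = ∫_{ℝ^{N-1}} P(x'-y',x_N,0) ∂_{x_N}v(y',0,t) dy'
  + ∫_0^t ∫_{ℝ^{N-1}} ∂_t P(x'-y',x_N,t-s) ∂_{x_N}v(y',0,s) dy' ds`. -/
def Fop (N : ℕ) (v : HS N → ℝ → ℝ) (x : HS N) (t : ℝ) : ℝ :=
  (∫ y' : E' N, Pker N (x.1 - y') x.2 0 * dN N v (y', 0) t) +
    ∫ s in Ioo (0 : ℝ) t, ∫ y' : E' N,
      deriv (fun τ => Pker N (x.1 - y') x.2 τ) (t - s) * dN N v (y', 0) s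

/-- `D[v](x,t) = ∫_0^t [S_1(t-s)F[v](s)](x) ds`. -/
def Dop (N : ℕ) (v : HS N → ℝ → ℝ) (x : HS N) (t : ℝ) : ℝ :=
  ∫ s in Ioo (0 : ℝ) t, S1 N (t - s) (fun y => Fop N v y s) x

/-- `L^p` norm on the half-space. -/
def hLpNorm (N : ℕ) (p : ℝ≥0∞) (f : HS N → ℝ) : ℝ≥0∞ :=
  eLpNorm f p (volume.restrict (halfSpace N))

/-- `L^r` norm on the boundary `ℝ^{N-1}`. -/
def bLpNorm (N : ℕ) (r : ℝ≥0∞) (g : E' N → ℝ) : ℝ≥0∞ :=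
  eLpNorm g r (volume : Measure (E' N))

/-- `E[v](t) = t^{(N/2)(1/q-1/p)} [‖v(t)‖_{L^p} + t^{1/2} ‖∂_{x_N}v(t)‖_{L^p}]
  + sup_{q≤r≤p} t^{1/2} ‖∂_{x_N}v(·,0,t)‖_{L^r(ℝ^{N-1})}`. -/
def Enorm (N : ℕ) (q p : ℝ≥0∞) (v : HS N → ℝ → ℝ) (t : ℝ) : ℝ≥0∞ :=
  ENNReal.ofReal (t ^ ((N : ℝ) / 2 * ((q⁻¹).toReal - (p⁻¹).toReal))) *
      (hLpNorm N p (fun x => v x t) +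
        ENNReal.ofReal (t ^ ((1 : ℝ) / 2)) * hLpNorm N p (fun x => dN N v x t)) +
    ⨆ r ∈ Icc q p, ENNReal.ofReal (t ^ ((1 : ℝ) / 2)) *
      bLpNorm N r (fun x' => dN N v (x', 0) t)

/-- The norm of the space `X_{T,M}`: `‖v‖_{X_{T,M}} = sup_{0<t<T} e^{-Mt} E[v](t)`. -/
def XNorm (N : ℕ) (q p : ℝ≥0∞) (T M : ℝ) (v : HS N → ℝ → ℝ) : ℝ≥0∞ :=
  ⨆ t ∈ Ioo (0 : ℝ) T, ENNReal.ofReal (Real.exp (-M * t)) * Enorm N q p v t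

/-- Membership in `X_{T,M}`: `v, ∂_{x_N}v ∈ C(closure(ℝ^N_+) × (0,T))` and
`‖v‖_{X_{T,M}} < ∞`. -/
def memX (N : ℕ) (q p : ℝ≥0∞) (T M : ℝ) (v : HS N → ℝ → ℝ) : Prop :=
  ContinuousOn (fun z : HS N × ℝ => v z.1 z.2) (closedHalfSpace N ×ˢ Ioo 0 T) ∧
  ContinuousOn (fun z : HS N × ℝ => dN N v z.1 z.2) (closedHalfSpace N ×ˢ Ioo 0 T) ∧
  XNorm N q p T M v < ∞


lemma aux_jensen {α : Type*} [MeasurableSpace α] {μ : Measure α} {k g : α → ℝ≥0∞}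
    (hk : AEMeasurable k μ) (hg : AEMeasurable g μ) {r : ℝ} (hr : 1 ≤ r) :
    (∫⁻ y, k y * g y ∂μ) ^ r ≤ (∫⁻ y, k y ∂μ) ^ (r - 1) * ∫⁻ y, k y * g y ^ r ∂μ := by
  have hr0 : 0 < r := by linarith
  have h1 : 0 ≤ 1 - 1 / r := by
    rw [sub_nonneg, div_le_one hr0]; exact hr
  have h2 : 0 ≤ 1 / r := by positivity
  have key := ENNReal.lintegral_mul_norm_pow_le (μ := μ) (f := k) (g := fun y => k y * g y ^ r)
    hk (hk.mul (hg.pow_const r)) h1 h2 (by ring)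
  have e : ∀ y, k y ^ (1 - 1 / r) * (k y * g y ^ r) ^ (1 / r) = k y * g y := by
    intro y
    rw [ENNReal.mul_rpow_of_nonneg _ _ h2, ← ENNReal.rpow_mul, mul_one_div_cancel hr0.ne',
      ENNReal.rpow_one, ← mul_assoc, ← ENNReal.rpow_add_of_nonneg _ _ h1 h2]
    simp
  simp_rw [e] at key
  calc _ ≤ _ := ENNReal.rpow_le_rpow key hr0.le
    _ = _ := by
      rw [ENNReal.mul_rpow_of_nonneg _ _ hr0.le, ← ENNReal.rpow_mul, ← ENNReal.rpow_mul,
        one_div_mul_cancel hr0.ne', ENNReal.rpow_one]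
      congr 2
      field_simp

lemma aux_minkowski {α β : Type*} [MeasurableSpace α] [MeasurableSpace β] {μ : Measure α}
    {ν : Measure β} [SFinite μ] [SFinite ν] {F : α → β → ℝ≥0∞} {w : β → ℝ≥0∞} {A : ℝ≥0∞}
    (hF : Measurable (Function.uncurry F)) (hw : Measurable w)
    (hw0 : ∀ᵐ y ∂ν, w y ≠ 0 ∧ w y ≠ ∞) {r : ℝ} (hr : 1 ≤ r)
    (hb : ∀ᵐ y ∂ν, ∫⁻ x, F x y ^ r ∂μ ≤ A * w y ^ r) :
    ∫⁻ x, (∫⁻ y, F x y ∂ν) ^ r ∂μ ≤ A * (∫⁻ y, w y ∂ν) ^ r := by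
  have hr0 : 0 < r := by linarith
  have e : ∀ x, ∫⁻ y, F x y ∂ν = ∫⁻ y, w y * (F x y / w y) ∂ν := by
    intro x
    refine lintegral_congr_ae ?_
    filter_upwards [hw0] with y hy
    rw [ENNReal.mul_div_cancel hy.1 hy.2]
  have hFx : ∀ x, Measurable (fun y => F x y) := fun x => hF.comp measurable_prodMk_left
  have hFy : ∀ y, Measurable (fun x => F x y) := fun x => hF.comp measurable_prodMk_right
  calc ∫⁻ x, (∫⁻ y, F x y ∂ν) ^ r ∂μ
      ≤ ∫⁻ x, (∫⁻ y, w y ∂ν) ^ (r - 1) * ∫⁻ y, w y * (F x y / w y) ^ r ∂ν ∂μ := by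
        refine lintegral_mono fun x => ?_
        rw [e x]
        exact aux_jensen hw.aemeasurable ((hFx x).div hw).aemeasurable hr
    _ = (∫⁻ y, w y ∂ν) ^ (r - 1) * ∫⁻ x, ∫⁻ y, w y * (F x y / w y) ^ r ∂ν ∂μ := by
        rw [lintegral_const_mul]
        refine Measurable.lintegral_prod_right' (f := fun z : α × β => w z.2 * (F z.1 z.2 / w z.2) ^ r) ?_
        have : Measurable fun z : α × β => F z.1 z.2 := hF
        fun_prop
    _ = (∫⁻ y, w y ∂ν) ^ (r - 1) * ∫⁻ y, ∫⁻ x, w y * (F x y / w y) ^ r ∂μ ∂ν := by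
        rw [lintegral_lintegral_swap]
        have : Measurable fun z : α × β => F z.1 z.2 := hF
        refine Measurable.aemeasurable ?_
        change Measurable fun z : α × β => w z.2 * (F z.1 z.2 / w z.2) ^ r
        fun_prop
    _ ≤ (∫⁻ y, w y ∂ν) ^ (r - 1) * ∫⁻ y, A * w y ∂ν := by
        refine mul_le_mul' le_rfl (lintegral_mono_ae ?_)
        filter_upwards [hw0, hb] with y hy hby
        have hwr0 : w y ^ r ≠ 0 := by
          simp [ENNReal.rpow_eq_zero_iff, hy.1, hy.2]
        have hwrt : w y ^ r ≠ ∞ := ENNReal.rpow_ne_top_of_nonneg hr0.le hy.2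
        simp_rw [ENNReal.div_rpow_of_nonneg _ _ hr0.le, div_eq_mul_inv]
        rw [lintegral_const_mul _ (((hFy y).pow_const r).mul_const _),
          lintegral_mul_const _ ((hFy y).pow_const r)]
        calc w y * ((∫⁻ x, F x y ^ r ∂μ) * (w y ^ r)⁻¹)
            ≤ w y * ((A * w y ^ r) * (w y ^ r)⁻¹) := by gcongr
          _ = A * w y := by
            rw [mul_assoc, ENNReal.mul_inv_cancel hwr0 hwrt]; ring
    _ = A * (∫⁻ y, w y ∂ν) ^ r := by
        rw [lintegral_const_mul _ hw, mul_left_comm]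
        congr 1
        conv_lhs => rw [← ENNReal.rpow_one (∫⁻ y, w y ∂ν), ← ENNReal.rpow_mul]
        rw [← ENNReal.rpow_add_of_nonneg _ _ (by linarith) (by norm_num)]
        congr 1; ring

/-- normalised Poisson kernel -/
def kk (N : ℕ) (a : ℝ) (y : E' N) : ℝ≥0∞ :=
  ENNReal.ofReal (a ^ ((1 : ℝ) - N) * (1 + ‖y‖ ^ 2 / a ^ 2) ^ (-(N : ℝ) / 2))

def KI (N : ℕ) : ℝ≥0∞ := ∫⁻ z : E' N, ENNReal.ofReal ((1 + ‖z‖ ^ 2) ^ (-(N : ℝ) / 2))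

lemma KI_ne_top (N : ℕ) (hN : 2 ≤ N) : KI N ≠ ∞ := by
  have h : Integrable (fun z : E' N => (1 + ‖z‖ ^ 2) ^ (-(N : ℝ) / 2)) := by
    apply integrable_rpow_neg_one_add_norm_sq
    simp
    omega
  have := h.lintegral_lt_top
  exact this.ne

lemma kk_meas (N : ℕ) : Measurable (fun z : ℝ × E' N => kk N z.1 z.2) := by
  unfold kk
  fun_prop

lemma kk_le (N : ℕ) {a : ℝ} (ha : 0 < a) (y : E' N) :
    kk N a y ≤ ENNReal.ofReal (a ^ ((1 : ℝ) - N)) := by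
  unfold kk
  apply ENNReal.ofReal_le_ofReal
  apply mul_le_of_le_one_right (by positivity)
  apply Real.rpow_le_one_of_one_le_of_nonpos
  · have : 0 ≤ ‖y‖ ^ 2 / a ^ 2 := by positivity
    linarith
  · have : (0 : ℝ) ≤ N := by positivity
    linarith

lemma kk_int (N : ℕ) (hN : 2 ≤ N) {a : ℝ} (ha : 0 < a) :
    ∫⁻ y : E' N, kk N a y = KI N := by
  unfold KI
  have hm : Measurable (fun y : E' N => kk N a y) := (kk_meas N).comp measurable_prodMk_left
  have h0 := Measure.map_addHaar_smul (volume : Measure (E' N)) ha.ne'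
  have h1 : ∫⁻ y, kk N a y ∂(Measure.map (a • ·) (volume : Measure (E' N)))
      = ∫⁻ z : E' N, kk N a (a • z) := lintegral_map hm (measurable_const_smul a)
  rw [h0, lintegral_smul_measure] at h1
  have h2 : ∀ z : E' N, kk N a (a • z) = ENNReal.ofReal (a ^ ((1 : ℝ) - N)) *
      ENNReal.ofReal ((1 + ‖z‖ ^ 2) ^ (-(N : ℝ) / 2)) := by
    intro z
    unfold kk
    rw [ENNReal.ofReal_mul (by positivity), norm_smul, mul_pow, Real.norm_eq_abs, sq_abs,
      mul_div_cancel_left₀ _ (by positivity)]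
  simp_rw [h2] at h1
  rw [lintegral_const_mul _ (by fun_prop)] at h1
  have h3 : ENNReal.ofReal |(a ^ Module.finrank ℝ (E' N))⁻¹| = ENNReal.ofReal (a ^ ((1 : ℝ) - N)) := by
    congr 1
    rw [abs_of_pos (by positivity)]
    simp only [finrank_euclideanSpace, Fintype.card_fin]
    rw [show (1 : ℝ) - N = -((N - 1 : ℕ) : ℝ) by push_cast [Nat.cast_sub (show 1 ≤ N by omega)]; ring,
      Real.rpow_neg ha.le, Real.rpow_natCast]
  rw [h3, smul_eq_mul] at h1
  have hc : ENNReal.ofReal (a ^ ((1 : ℝ) - N)) ≠ 0 := by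
    simp; positivity
  exact (ENNReal.mul_right_inj hc ENNReal.ofReal_ne_top).1 h1

def cv (N : ℕ) (a : ℝ) (g : E' N → ℝ≥0∞) (x : E' N) : ℝ≥0∞ := ∫⁻ y, kk N a (x - y) * g y

lemma kk_int_left (N : ℕ) (hN : 2 ≤ N) {a : ℝ} (ha : 0 < a) (x : E' N) :
    ∫⁻ y : E' N, kk N a (x - y) = KI N := by
  rw [lintegral_sub_left_eq_self (fun y => kk N a y) x, kk_int N hN ha]

lemma kk_int_right (N : ℕ) (hN : 2 ≤ N) {a : ℝ} (ha : 0 < a) (y : E' N) :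
    ∫⁻ x : E' N, kk N a (x - y) = KI N := by
  rw [lintegral_sub_right_eq_self (fun y => kk N a y) y, kk_int N hN ha]

lemma kk_meas_sub (N : ℕ) (a : ℝ) : Measurable (fun z : E' N × E' N => kk N a (z.1 - z.2)) :=
  (kk_meas N).comp (f := fun z : E' N × E' N => (a, z.1 - z.2)) (by fun_prop)

lemma cv_meas (N : ℕ) (a : ℝ) {g : E' N → ℝ≥0∞} (hg : Measurable g) : Measurable (cv N a g) := by
  unfold cv
  have := kk_meas_sub N a
  refine Measurable.lintegral_prod_right' (f := fun z : E' N × E' N => kk N a (z.1 - z.2) * g z.2) ?_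
  fun_prop

lemma cv_int (N : ℕ) (hN : 2 ≤ N) {a : ℝ} (ha : 0 < a) {g : E' N → ℝ≥0∞} (hg : Measurable g) :
    ∫⁻ x, cv N a g x = KI N * ∫⁻ y, g y := by
  unfold cv
  have h := kk_meas_sub N a
  rw [lintegral_lintegral_swap]
  · have : ∀ y, ∫⁻ x, kk N a (x - y) * g y = KI N * g y := by
      intro y
      have hy : Measurable (fun x : E' N => kk N a (x - y)) :=
        (kk_meas N).comp (f := fun x : E' N => (a, x - y)) (by fun_prop)
      rw [lintegral_mul_const _ hy, kk_int_right N hN ha]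
    simp_rw [this]
    rw [lintegral_const_mul _ hg]
  · refine Measurable.aemeasurable ?_
    change Measurable (fun z : E' N × E' N => kk N a (z.1 - z.2) * g z.2)
    fun_prop

lemma cv_jensen (N : ℕ) (hN : 2 ≤ N) {a : ℝ} (ha : 0 < a) {g : E' N → ℝ≥0∞} (hg : Measurable g)
    {r : ℝ} (hr : 1 ≤ r) (x : E' N) :
    cv N a g x ^ r ≤ KI N ^ (r - 1) * cv N a (fun y => g y ^ r) x := by
  have h := kk_meas_sub N a
  have := aux_jensen (μ := volume) (k := fun y : E' N => kk N a (x - y)) (g := g)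
    (h.comp measurable_prodMk_left).aemeasurable hg.aemeasurable hr
  rw [kk_int_left N hN ha] at this
  exact this

lemma cv_Lr (N : ℕ) (hN : 2 ≤ N) {a : ℝ} (ha : 0 < a) {g : E' N → ℝ≥0∞} (hg : Measurable g)
    {r : ℝ} (hr : 1 ≤ r) :
    ∫⁻ x, cv N a g x ^ r ≤ KI N ^ r * ∫⁻ y, g y ^ r := by
  calc _ ≤ ∫⁻ x, KI N ^ (r - 1) * cv N a (fun y => g y ^ r) x :=
        lintegral_mono fun x => cv_jensen N hN ha hg hr x
    _ = KI N ^ (r - 1) * (KI N * ∫⁻ y, g y ^ r) := by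
        rw [lintegral_const_mul _ (cv_meas N a (hg.pow_const r)), cv_int N hN ha (hg.pow_const r)]
    _ = _ := by
        rw [← mul_assoc]
        congr 1
        conv_lhs => enter [2]; rw [← ENNReal.rpow_one (KI N)]
        rw [← ENNReal.rpow_add_of_nonneg _ _ (by linarith) (by norm_num)]
        congr 1; ring

lemma cv_LqLp (N : ℕ) (hN : 2 ≤ N) {a : ℝ} (ha : 0 < a) {g : E' N → ℝ≥0∞} (hg : Measurable g)
    {q p : ℝ} (hq : 1 ≤ q) (hqp : q ≤ p) :
    ∫⁻ x, cv N a g x ^ p ≤ (KI N ^ (q - 1)) ^ (p / q) * KI N *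
      ENNReal.ofReal (a ^ (((1 : ℝ) - N) * (p / q - 1))) * (∫⁻ y, g y ^ q) ^ (p / q) := by
  have hq0 : 0 < q := by linarith
  have hpq : 0 ≤ p / q - 1 := by
    rw [sub_nonneg, one_le_div hq0]; exact hqp
  set h : E' N → ℝ≥0∞ := cv N a (fun y => g y ^ q) with hh
  have hmq := hg.pow_const q
  have hle : ∀ x, h x ≤ ENNReal.ofReal (a ^ ((1 : ℝ) - N)) * ∫⁻ y, g y ^ q := by
    intro x
    rw [← lintegral_const_mul _ hmq]
    refine lintegral_mono fun y => ?_
    gcongr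
    exact kk_le N ha _
  have split : ∀ c : ℝ≥0∞, c ^ (p / q) = c * c ^ (p / q - 1) := by
    intro c
    conv_rhs => enter [1]; rw [← ENNReal.rpow_one c]
    rw [← ENNReal.rpow_add_of_nonneg _ _ (by norm_num) hpq]
    congr 1; ring
  calc ∫⁻ x, cv N a g x ^ p
      ≤ ∫⁻ x, (KI N ^ (q - 1)) ^ (p / q) * (h x *
        (ENNReal.ofReal (a ^ ((1 : ℝ) - N)) * ∫⁻ y, g y ^ q) ^ (p / q - 1)) := by
        refine lintegral_mono fun x => ?_
        have : cv N a g x ^ p = (cv N a g x ^ q) ^ (p / q) := by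
          rw [← ENNReal.rpow_mul, mul_div_cancel₀ _ hq0.ne']
        rw [this]
        calc _ ≤ (KI N ^ (q - 1) * h x) ^ (p / q) :=
              ENNReal.rpow_le_rpow (cv_jensen N hN ha hg hq x) (by linarith)
          _ = (KI N ^ (q - 1)) ^ (p / q) * (h x * h x ^ (p / q - 1)) := by
              rw [ENNReal.mul_rpow_of_nonneg _ _ (by linarith), split (h x)]
          _ ≤ _ := by
              gcongr
              exact hle x
    _ = _ := by
        rw [lintegral_const_mul _ ((cv_meas N a hmq).mul_const _), lintegral_mul_const _ (cv_meas N a hmq),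
          cv_int N hN ha hmq, ENNReal.mul_rpow_of_nonneg _ _ hpq, split (∫⁻ y, g y ^ q),
          Real.rpow_mul ha.le, ENNReal.ofReal_rpow_of_nonneg (by positivity) hpq]
        ring

lemma Pker_enorm (N : ℕ) (y : E' N) {z τ : ℝ} (ha : 0 < z + τ) :
    ‖Pker N y z τ‖ₑ = ‖PC N‖ₑ * kk N (z + τ) y := by
  unfold Pker kk
  rw [mul_assoc, enorm_mul, Real.enorm_of_nonneg (r := _ * _) (by positivity)]

lemma Pker_deriv_enorm (N : ℕ) (hN : 2 ≤ N) (y : E' N) {z τ : ℝ} (ha : 0 < z + τ) :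
    ‖deriv (fun τ => Pker N y z τ) τ‖ₑ ≤
      (ENNReal.ofReal (2 * N) * ‖PC N‖ₑ) *
        (ENNReal.ofReal ((z + τ)⁻¹) * kk N (z + τ) y) := by
  set a := z + τ with haa
  set ρ := ‖y‖ ^ 2 with hρ
  have hρ0 : 0 ≤ ρ := by positivity
  have hN1 : (2 : ℝ) ≤ N := by exact_mod_cast hN
  have hb : 0 < 1 + ρ / a ^ 2 := by positivity
  have d0 : HasDerivAt (fun τ : ℝ => z + τ) 1 τ := by
    simpa using (hasDerivAt_id τ).const_add z
  have d1 : HasDerivAt (fun τ : ℝ => (z + τ) ^ ((1 : ℝ) - N)) (1 * ((1 : ℝ) - N) * a ^ ((1 : ℝ) - N - 1)) τ :=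
    d0.rpow_const (Or.inl ha.ne')
  have d2 : HasDerivAt (fun τ : ℝ => 1 + ρ / (z + τ) ^ 2) (-(2 * ρ / a ^ 3)) τ := by
    have h := (((d0.pow 2).inv (by positivity : (z + τ) ^ 2 ≠ 0)).const_mul ρ).const_add 1
    have h' : HasDerivAt (fun τ : ℝ => 1 + ρ / (z + τ) ^ 2)
        (ρ * (-(((2 : ℕ) : ℝ) * a ^ (2 - 1) * 1) / (a ^ 2) ^ 2)) τ := h
    have e : ρ * (-(((2 : ℕ) : ℝ) * a ^ (2 - 1) * 1) / (a ^ 2) ^ 2) = -(2 * ρ / a ^ 3) := by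
      have := ha.ne'
      push_cast
      field_simp
    rw [e] at h'
    exact h'
  have d3 := d2.rpow_const (p := -(N : ℝ) / 2) (Or.inl hb.ne')
  have d4 := (d1.const_mul (PC N)).mul d3
  have hd : deriv (fun τ => Pker N y z τ) τ = PC N * (a⁻¹ * (((1 : ℝ) - N) +
      N * (ρ / a ^ 2 / (1 + ρ / a ^ 2)))) * (a ^ ((1 : ℝ) - N) * (1 + ρ / a ^ 2) ^ (-(N : ℝ) / 2)) := by
    refine Eq.trans (HasDerivAt.deriv (f' := _) (by exact d4)) ?_
    simp only [← haa]
    rw [Real.rpow_sub_one ha.ne', Real.rpow_sub_one hb.ne']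
    have := ha.ne'
    have := hb.ne'
    generalize a ^ ((1 : ℝ) - N) = A
    generalize (1 + ρ / a ^ 2) ^ (-(N : ℝ) / 2) = B
    field_simp
  rw [hd, enorm_mul, enorm_mul, Real.enorm_of_nonneg (r := _ * _ ^ _) (by positivity)]
  have h1 : ‖a⁻¹ * (((1 : ℝ) - N) + N * (ρ / a ^ 2 / (1 + ρ / a ^ 2)))‖ₑ ≤
      ENNReal.ofReal (2 * N) * ENNReal.ofReal (a⁻¹) := by
    rw [enorm_mul, Real.enorm_of_nonneg (by positivity), mul_comm]
    gcongr
    rw [Real.enorm_eq_ofReal_abs]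
    apply ENNReal.ofReal_le_ofReal
    have e1 : 0 ≤ ρ / a ^ 2 / (1 + ρ / a ^ 2) := by positivity
    have e2 : ρ / a ^ 2 / (1 + ρ / a ^ 2) ≤ 1 := by
      rw [div_le_one hb]; linarith
    rw [abs_le]
    constructor <;> nlinarith
  unfold kk
  calc _ ≤ ‖PC N‖ₑ * (ENNReal.ofReal (2 * N) * ENNReal.ofReal (a⁻¹)) * _ := by gcongr
    _ = _ := by ring

lemma wlint {p : ℝ} (hp : 1 < p) {t : ℝ} (ht : 0 < t) :
    ∫⁻ s in Ioo 0 t, ENNReal.ofReal ((t - s) ^ (-1 + 1 / p) * s ^ (-(1 : ℝ) / 2)) ≤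
      ENNReal.ofReal ((2 * 2 ^ (1 - 1 / p) + p * 2 ^ ((1 : ℝ) / 2)) * t ^ (-(1 : ℝ) / 2 + 1 / p)) := by
  have hp0 : 0 < p := by linarith
  have hip : 0 < 1 / p := by positivity
  have hip1 : 1 / p < 1 := by rw [div_lt_one hp0]; exact hp
  have i1 : IntervalIntegrable (fun s : ℝ => s ^ (-(1 : ℝ) / 2)) volume 0 t :=
    intervalIntegral.intervalIntegrable_rpow' (by norm_num)
  have i2' : IntervalIntegrable (fun s : ℝ => s ^ (-1 + 1 / p)) volume 0 t :=
    intervalIntegral.intervalIntegrable_rpow' (by linarith)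
  have i2 : IntervalIntegrable (fun s : ℝ => (t - s) ^ (-1 + 1 / p)) volume 0 t := by
    simpa using (i2'.comp_sub_left t).symm
  have v1 : ∫ s in (0 : ℝ)..t, s ^ (-(1 : ℝ) / 2) = 2 * t ^ ((1 : ℝ) / 2) := by
    rw [integral_rpow (Or.inl (by norm_num))]
    rw [show (-(1 : ℝ) / 2 + 1) = 1 / 2 by norm_num, Real.zero_rpow (by norm_num)]
    ring
  have v2 : ∫ s in (0 : ℝ)..t, (t - s) ^ (-1 + 1 / p) = p * t ^ (1 / p) := by
    rw [intervalIntegral.integral_comp_sub_left (fun s => s ^ (-1 + 1 / p)) t]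
    rw [integral_rpow (Or.inl (by linarith))]
    rw [show (-1 + 1 / p + 1) = 1 / p by ring, sub_self, sub_zero, Real.zero_rpow hip.ne']
    field_simp
    ring
  set f : ℝ → ℝ := fun s => (t / 2) ^ (-1 + 1 / p) * s ^ (-(1 : ℝ) / 2) +
    (t / 2) ^ (-(1 : ℝ) / 2) * (t - s) ^ (-1 + 1 / p) with hf
  have i3 : IntervalIntegrable f volume 0 t := (i1.const_mul _).add (i2.const_mul _)
  have v3 : ∫ s in (0 : ℝ)..t, f s =
      (2 * 2 ^ (1 - 1 / p) + p * 2 ^ ((1 : ℝ) / 2)) * t ^ (-(1 : ℝ) / 2 + 1 / p) := by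
    rw [hf, intervalIntegral.integral_add (i1.const_mul _) (i2.const_mul _),
      intervalIntegral.integral_const_mul, intervalIntegral.integral_const_mul, v1, v2]
    rw [Real.div_rpow ht.le (by norm_num), Real.div_rpow ht.le (by norm_num)]
    rw [show (1 : ℝ) - 1 / p = -(-1 + 1 / p) by ring, Real.rpow_neg (by norm_num : (0 : ℝ) ≤ 2)]
    rw [show (-(1 : ℝ) / 2) = -(1 / 2) by ring, Real.rpow_neg (by norm_num : (0 : ℝ) ≤ 2)]
    have e1 : t ^ (-(1 / 2) + 1 / p) = t ^ (-1 + 1 / p) * t ^ ((1 : ℝ) / 2) := by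
      rw [← Real.rpow_add ht]; congr 1; ring
    have e2 : t ^ (-(1 / 2) + 1 / p) = t ^ (-(1 / 2 : ℝ)) * t ^ (1 / p) := by
      rw [← Real.rpow_add ht]
    rw [add_mul]
    nth_rewrite 1 [e1]
    rw [e2, div_inv_eq_mul, div_eq_mul_inv]
    ring
  have hfn : ∀ s ∈ Ioo 0 t, 0 ≤ f s := by
    intro s hs
    have : 0 < t - s := by linarith [hs.2]
    have := hs.1
    positivity
  have hint : IntegrableOn f (Ioo 0 t) := by
    rw [← integrableOn_Ioc_iff_integrableOn_Ioo]
    exact (intervalIntegrable_iff_integrableOn_Ioc_of_le ht.le).1 i3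
  rw [← v3, intervalIntegral.integral_of_le ht.le, integral_Ioc_eq_integral_Ioo,
    ofReal_integral_eq_lintegral_ofReal hint
      ((ae_restrict_iff' measurableSet_Ioo).2 (Filter.Eventually.of_forall hfn))]
  refine setLIntegral_mono' measurableSet_Ioo fun s hs => ENNReal.ofReal_le_ofReal ?_
  have h1 : 0 < t - s := by linarith [hs.2]
  have h2 := hs.1
  have h3 : 0 < t / 2 := by positivity
  have n1 : 0 ≤ (t / 2) ^ (-1 + 1 / p) * s ^ (-(1 : ℝ) / 2) := by positivity
  have n2 : 0 ≤ (t / 2) ^ (-(1 : ℝ) / 2) * (t - s) ^ (-1 + 1 / p) := by positivity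
  rcases le_total s (t / 2) with h | h
  · have : (t - s) ^ (-1 + 1 / p) ≤ (t / 2) ^ (-1 + 1 / p) :=
      Real.rpow_le_rpow_of_nonpos h3 (by linarith) (by linarith)
    have : (t - s) ^ (-1 + 1 / p) * s ^ (-(1 : ℝ) / 2) ≤ (t / 2) ^ (-1 + 1 / p) * s ^ (-(1 : ℝ) / 2) := by
      gcongr
    simp only [hf]; linarith
  · have : s ^ (-(1 : ℝ) / 2) ≤ (t / 2) ^ (-(1 : ℝ) / 2) :=
      Real.rpow_le_rpow_of_nonpos h3 h (by norm_num)
    have : (t - s) ^ (-1 + 1 / p) * s ^ (-(1 : ℝ) / 2) ≤ (t - s) ^ (-1 + 1 / p) * (t / 2) ^ (-(1 : ℝ) / 2) := by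
      gcongr
    simp only [hf]; linarith

lemma zlint {p : ℝ} (hp : 1 < p) {τ : ℝ} (ht : 0 < τ) :
    ∫⁻ z in Ioi 0, ENNReal.ofReal ((z + τ) ^ (-p)) = ENNReal.ofReal (1 / (p - 1) * τ ^ (1 - p)) := by
  have hi : IntegrableOn (fun z : ℝ => (z + τ) ^ (-p)) (Ioi 0) :=
    integrableOn_add_rpow_Ioi_of_lt (by linarith) (by linarith)
  rw [← ofReal_integral_eq_lintegral_ofReal hi]
  · congr 1
    have := (measurePreserving_add_right volume τ).setIntegral_preimage_emb
      (measurableEmbedding_addRight τ) (fun z : ℝ => z ^ (-p)) (Ioi τ)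
    rw [show (fun x : ℝ => x + τ) ⁻¹' Ioi τ = Ioi 0 by ext; simp] at this
    rw [this, integral_Ioi_rpow_of_lt (by linarith) ht]
    rw [show -p + 1 = 1 - p by ring, show p - 1 = -(1 - p) by ring]
    have : (1 - p) ≠ 0 := by linarith
    field_simp
  · refine (ae_restrict_iff' measurableSet_Ioi).2 (Filter.Eventually.of_forall fun z hz => ?_)
    have : (0 : ℝ) < z := hz
    simp only [Pi.zero_apply]
    positivity

lemma half_lint (N : ℕ) {f : HS N → ℝ≥0∞} (hf : Measurable f) :
    ∫⁻ x in halfSpace N, f x = ∫⁻ z in Ioi (0 : ℝ), ∫⁻ x' : E' N, f (x', z) := by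
  have h : halfSpace N = univ ×ˢ Ioi (0 : ℝ) := by
    ext x; simp [halfSpace]
  rw [h, Measure.volume_eq_prod, ← Measure.prod_restrict, Measure.restrict_univ,
    lintegral_prod_symm' _ hf]

lemma cv_joint_meas (N : ℕ) {γ : Type*} [MeasurableSpace γ] {a : γ → ℝ} {x : γ → E' N}
    {g : γ → E' N → ℝ≥0∞} (ha : Measurable a) (hx : Measurable x)
    (hg : Measurable (Function.uncurry g)) :
    Measurable (fun c => cv N (a c) (g c) (x c)) := by
  unfold cv
  refine Measurable.lintegral_prod_right' (f := fun z : γ × E' N =>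
    kk N (a z.1) (x z.1 - z.2) * g z.1 z.2) ?_
  refine Measurable.mul ?_ hg
  exact (kk_meas N).comp (f := fun z : γ × E' N => (a z.1, x z.1 - z.2)) (by fun_prop)

/-- first term -/
lemma Aterm (N : ℕ) (hN : 2 ≤ N) {q p : ℝ} (hq : 1 ≤ q) (hqp : N * q < p * (N - 1)) :
    ∃ CA : ℝ≥0∞, CA ≠ ∞ ∧ ∀ (g : E' N → ℝ≥0∞) (Y : ℝ≥0∞), Measurable g →
      ∫⁻ y, g y ^ q ≤ Y ^ q → ∫⁻ y, g y ^ p ≤ Y ^ p →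
      ∫⁻ x in halfSpace N, cv N x.2 g x.1 ^ p ≤ CA * Y ^ p := by
  have hN1 : (2 : ℝ) ≤ N := by exact_mod_cast hN
  have hq0 : 0 < q := by linarith
  have hqp' : q ≤ p := by nlinarith
  have hp : 1 ≤ p := by linarith
  have hβ : ((1 : ℝ) - N) * (p / q - 1) < -1 := by
    have : p / q - 1 = (p - q) / q := by field_simp
    rw [this, mul_div_assoc', div_lt_iff₀ hq0]
    linarith
  set J : ℝ≥0∞ := ∫⁻ z in Ioi (1 : ℝ), ENNReal.ofReal (z ^ (((1 : ℝ) - N) * (p / q - 1))) with hJ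
  have hJt : J ≠ ∞ := (integrableOn_Ioi_rpow_of_lt hβ one_pos).lintegral_lt_top.ne
  have hK := KI_ne_top N hN
  refine ⟨KI N ^ p + (KI N ^ (q - 1)) ^ (p / q) * KI N * J, ?_, ?_⟩
  · refine ENNReal.add_ne_top.2 ⟨ENNReal.rpow_ne_top_of_nonneg (by linarith) hK, ?_⟩
    refine ENNReal.mul_ne_top (ENNReal.mul_ne_top ?_ hK) hJt
    exact ENNReal.rpow_ne_top_of_nonneg (by positivity)
      (ENNReal.rpow_ne_top_of_nonneg (by linarith) hK)
  intro g Y hg hgq hgp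
  have hm : Measurable (fun x : HS N => cv N x.2 g x.1 ^ p) :=
    (cv_joint_meas N (g := fun _ : HS N => g) measurable_snd measurable_fst
      (hg.comp measurable_snd)).pow_const p
  rw [half_lint N hm, ← Ioc_union_Ioi_eq_Ioi (zero_le_one' ℝ),
    lintegral_union measurableSet_Ioi (by
      rw [Set.disjoint_left]; intro z h1 h2; exact absurd h1.2 (not_le.2 h2)), add_mul]
  refine add_le_add ?_ ?_
  · calc _ ≤ ∫⁻ z in Ioc (0 : ℝ) 1, KI N ^ p * Y ^ p := by
          refine setLIntegral_mono' measurableSet_Ioc fun z hz => ?_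
          refine (cv_Lr N hN hz.1 hg hp).trans ?_
          gcongr
      _ = _ := by simp
  · calc _ ≤ ∫⁻ z in Ioi (1 : ℝ), ((KI N ^ (q - 1)) ^ (p / q) * KI N) *
            ENNReal.ofReal (z ^ (((1 : ℝ) - N) * (p / q - 1))) * Y ^ p := by
          refine setLIntegral_mono' measurableSet_Ioi fun z hz => ?_
          have hz : (1 : ℝ) < z := hz
          refine (cv_LqLp N hN (by linarith) hg hq hqp').trans ?_
          refine mul_le_mul' le_rfl ?_
          calc _ ≤ (Y ^ q) ^ (p / q) := ENNReal.rpow_le_rpow hgq (by positivity)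
            _ = Y ^ p := by rw [← ENNReal.rpow_mul, mul_div_cancel₀ _ hq0.ne']
      _ = _ := by
          rw [lintegral_mul_const _ (by fun_prop), lintegral_const_mul _ (by fun_prop)]

lemma Bterm_meas (N : ℕ) {H : E' N × ℝ → ℝ≥0∞} (hH : Measurable H) (t : ℝ) :
    Measurable (fun z : HS N × ℝ => ENNReal.ofReal ((z.1.2 + (t - z.2))⁻¹) *
      cv N (z.1.2 + (t - z.2)) (fun y => H (y, z.2)) z.1.1) := by
  refine Measurable.mul (by fun_prop) ?_
  refine cv_joint_meas N (γ := HS N × ℝ) (g := fun z y => H (y, z.2)) (by fun_prop) (by fun_prop) ?_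
  exact hH.comp (f := fun w : (HS N × ℝ) × E' N => (w.2, w.1.2)) (by fun_prop)

/-- second term -/
lemma Bterm (N : ℕ) (hN : 2 ≤ N) {p : ℝ} (hp : 1 < p) {H : E' N × ℝ → ℝ≥0∞}
    (hH : Measurable H) {t : ℝ} (ht : 0 < t) {Y : ℝ≥0∞}
    (hb : ∀ s ∈ Ioo 0 t, ∫⁻ y, H (y, s) ^ p ≤ (ENNReal.ofReal (s ^ (-(1 : ℝ) / 2)) * Y) ^ p) :
    ∫⁻ x in halfSpace N, (∫⁻ s in Ioo 0 t, ENNReal.ofReal ((x.2 + (t - s))⁻¹) *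
      cv N (x.2 + (t - s)) (fun y => H (y, s)) x.1) ^ p ≤
    (KI N ^ p * ENNReal.ofReal (1 / (p - 1)) * Y ^ p) *
      ENNReal.ofReal ((2 * 2 ^ (1 - 1 / p) + p * 2 ^ ((1 : ℝ) / 2)) * t ^ (-(1 : ℝ) / 2 + 1 / p)) ^ p := by
  have hp0 : 0 < p := by linarith
  have hm := Bterm_meas N hH t
  refine (aux_minkowski (ν := volume.restrict (Ioo 0 t))
    (w := fun s => ENNReal.ofReal ((t - s) ^ (-1 + 1 / p) * s ^ (-(1 : ℝ) / 2)))
    (A := KI N ^ p * ENNReal.ofReal (1 / (p - 1)) * Y ^ p) hm (by fun_prop) ?_ hp.le ?_).trans ?_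
  · refine (ae_restrict_iff' measurableSet_Ioo).2 (Filter.Eventually.of_forall fun s hs => ?_)
    refine ⟨?_, ENNReal.ofReal_ne_top⟩
    have h1 : 0 < t - s := by linarith [hs.2]
    have h2 := hs.1
    simp only [ne_eq, ENNReal.ofReal_eq_zero, not_le]
    positivity
  · refine (ae_restrict_iff' measurableSet_Ioo).2 (Filter.Eventually.of_forall fun s hs => ?_)
    have h1 : 0 < t - s := by linarith [hs.2]
    have h2 := hs.1
    have hms : Measurable (fun x : HS N => (ENNReal.ofReal ((x.2 + (t - s))⁻¹) *
      cv N (x.2 + (t - s)) (fun y => H (y, s)) x.1) ^ p) :=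
      (hm.comp measurable_prodMk_right).pow_const p
    have hHs : Measurable (fun y => H (y, s)) := hH.comp measurable_prodMk_right
    rw [half_lint N hms]
    calc _ ≤ ∫⁻ z in Ioi (0 : ℝ), ENNReal.ofReal ((z + (t - s)) ^ (-p)) *
            (KI N ^ p * (ENNReal.ofReal (s ^ (-(1 : ℝ) / 2)) * Y) ^ p) := by
          refine setLIntegral_mono' measurableSet_Ioi fun z hz => ?_
          have hz : (0 : ℝ) < z := hz
          have ha : 0 < z + (t - s) := by linarith
          simp_rw [ENNReal.mul_rpow_of_nonneg _ _ hp0.le]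
          rw [lintegral_const_mul _ ((cv_meas N _ hHs).pow_const p),
            ENNReal.ofReal_rpow_of_nonneg (by positivity) hp0.le, Real.inv_rpow ha.le,
            ← Real.rpow_neg ha.le]
          refine mul_le_mul' le_rfl ((cv_Lr N hN ha hHs hp.le).trans ?_)
          rw [← ENNReal.mul_rpow_of_nonneg _ _ hp0.le]
          exact mul_le_mul' le_rfl (hb s hs)
      _ = _ := by
          rw [lintegral_mul_const _ (by fun_prop), zlint hp h1,
            ENNReal.mul_rpow_of_nonneg _ _ hp0.le, ENNReal.ofReal_mul (by
              have : 0 < p - 1 := by linarith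
              positivity), ENNReal.ofReal_mul (p := _ ^ _) (by positivity),
            ENNReal.mul_rpow_of_nonneg _ _ hp0.le,
            ENNReal.ofReal_rpow_of_nonneg (x := (t - s) ^ _) (by positivity) hp0.le,
            ← Real.rpow_mul h1.le]
          rw [show (-1 + 1 / p) * p = 1 - p by field_simp; ring]
          ring
  · exact mul_le_mul' le_rfl (ENNReal.rpow_le_rpow (wlint hp ht) hp0.le)

lemma bnorm_le (N : ℕ) {q p : ℝ≥0∞} {T M : ℝ} {v : HS N → ℝ → ℝ} {r : ℝ≥0∞} (hr : r ∈ Icc q p)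
    {s t : ℝ} (hs : s ∈ Ioo 0 T) (hst : s ≤ t) (hM : 1 ≤ M) :
    bLpNorm N r (fun x' => dN N v (x', 0) s) ≤
      ENNReal.ofReal (s ^ (-(1 : ℝ) / 2)) * (ENNReal.ofReal (Real.exp (M * t)) * XNorm N q p T M v) := by
  have h1 : ENNReal.ofReal (s ^ ((1 : ℝ) / 2)) * bLpNorm N r (fun x' => dN N v (x', 0) s) ≤
      Enorm N q p v s := by
    unfold Enorm
    refine le_trans ?_ le_add_self
    exact le_iSup₂ (f := fun r (_ : r ∈ Icc q p) => ENNReal.ofReal (s ^ ((1 : ℝ) / 2)) *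
      bLpNorm N r (fun x' => dN N v (x', 0) s)) r hr
  have h2 : ENNReal.ofReal (Real.exp (-M * s)) * Enorm N q p v s ≤ XNorm N q p T M v := by
    unfold XNorm
    exact le_iSup₂ (f := fun s (_ : s ∈ Ioo (0 : ℝ) T) =>
      ENNReal.ofReal (Real.exp (-M * s)) * Enorm N q p v s) s hs
  have hs0 := hs.1
  calc bLpNorm N r (fun x' => dN N v (x', 0) s)
      = ENNReal.ofReal (s ^ (-(1 : ℝ) / 2)) * (ENNReal.ofReal (Real.exp (M * s)) *
        (ENNReal.ofReal (Real.exp (-M * s)) * (ENNReal.ofReal (s ^ ((1 : ℝ) / 2)) *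
          bLpNorm N r (fun x' => dN N v (x', 0) s)))) := by
        have e1 : ENNReal.ofReal (s ^ (-(1 : ℝ) / 2)) * ENNReal.ofReal (s ^ ((1 : ℝ) / 2)) = 1 := by
          rw [← ENNReal.ofReal_mul (by positivity), ← Real.rpow_add hs0]
          norm_num
        have e2 : ENNReal.ofReal (Real.exp (M * s)) * ENNReal.ofReal (Real.exp (-M * s)) = 1 := by
          rw [← ENNReal.ofReal_mul (by positivity), ← Real.exp_add]
          norm_num
        generalize bLpNorm N r (fun x' => dN N v (x', 0) s) = b
        calc b = 1 * 1 * b := by simp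
          _ = _ := by rw [← e1]; nth_rewrite 2 [e1]; rw [← e2]; ring
    _ ≤ _ := by
        refine mul_le_mul' le_rfl (mul_le_mul' (ENNReal.ofReal_le_ofReal ?_) ?_)
        · exact Real.exp_le_exp.2 (by nlinarith)
        · exact le_trans (mul_le_mul' le_rfl h1) h2

lemma lint_le (N : ℕ) {r : ℝ≥0∞} (hr1 : 1 ≤ r) (hr : r ≠ ∞) {g : E' N → ℝ} {Y : ℝ≥0∞}
    (h : bLpNorm N r g ≤ Y) : ∫⁻ y, ‖g y‖ₑ ^ r.toReal ≤ Y ^ r.toReal := by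
  have hr0 : r ≠ 0 := (zero_lt_one.trans_le hr1).ne'
  have h0 : 0 < r.toReal := ENNReal.toReal_pos hr0 hr
  unfold bLpNorm at h
  rw [eLpNorm_eq_lintegral_rpow_enorm_toReal hr0 hr] at h
  have := ENNReal.rpow_le_rpow h h0.le
  rwa [← ENNReal.rpow_mul, one_div_mul_cancel h0.ne', ENNReal.rpow_one] at this

lemma Fop_enorm_le (N : ℕ) (hN : 2 ≤ N) (v : HS N → ℝ → ℝ) (x : HS N) (hx : x ∈ halfSpace N) (t : ℝ)
    {H : E' N × ℝ → ℝ≥0∞} (hH : ∀ y, ∀ s, 0 < s → s ≤ t → H (y, s) = ‖dN N v (y, 0) s‖ₑ)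
    (hHm : Measurable H) (ht : 0 < t) :
    ‖Fop N v x t‖ₑ ≤ ‖PC N‖ₑ * cv N x.2 (fun y => H (y, t)) x.1 +
      (ENNReal.ofReal (2 * N) * ‖PC N‖ₑ) * ∫⁻ s in Ioo 0 t, ENNReal.ofReal ((x.2 + (t - s))⁻¹) *
        cv N (x.2 + (t - s)) (fun y => H (y, s)) x.1 := by
  have hx0 : 0 < x.2 := hx
  have hc2 : ENNReal.ofReal (2 * N) * ‖PC N‖ₑ ≠ ∞ := ENNReal.mul_ne_top ENNReal.ofReal_ne_top (by simp)
  unfold Fop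
  refine (enorm_add_le _ _).trans (add_le_add ?_ ?_)
  · refine (enorm_integral_le_lintegral_enorm _).trans ?_
    unfold cv
    rw [← lintegral_const_mul' _ _ (by simp)]
    refine lintegral_mono fun y => ?_
    beta_reduce
    rw [enorm_mul, Pker_enorm N _ (by linarith), hH y t ht le_rfl, add_zero, mul_assoc]
  · refine (enorm_integral_le_lintegral_enorm _).trans ?_
    rw [← lintegral_const_mul' _ _ hc2]
    refine setLIntegral_mono' measurableSet_Ioo fun s hs => ?_
    refine (enorm_integral_le_lintegral_enorm _).trans ?_
    unfold cv
    rw [← mul_assoc, ← lintegral_const_mul' _ _ (ENNReal.mul_ne_top hc2 ENNReal.ofReal_ne_top)]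
    refine lintegral_mono fun y => ?_
    have ha : 0 < x.2 + (t - s) := by linarith [hs.2]
    beta_reduce
    rw [enorm_mul, hH y s hs.1 hs.2.le]
    refine (mul_le_mul' (Pker_deriv_enorm N hN _ ha) le_rfl).trans (le_of_eq ?_)
    ring

open Classical in
lemma H_exists (N : ℕ) {v : HS N → ℝ → ℝ} {T : ℝ}
    (h : ContinuousOn (fun z : HS N × ℝ => dN N v z.1 z.2) (closedHalfSpace N ×ˢ Ioo 0 T)) :
    ∃ H : E' N × ℝ → ℝ≥0∞, Measurable H ∧ ∀ y, ∀ s ∈ Ioo 0 T, H (y, s) = ‖dN N v (y, 0) s‖ₑ := by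
  have h1 : ContinuousOn (fun z : E' N × ℝ => dN N v (z.1, 0) z.2) (univ ×ˢ Ioo 0 T) := by
    refine h.comp (f := fun z : E' N × ℝ => (((z.1, 0) : HS N), z.2)) (by fun_prop) ?_
    intro z hz
    exact ⟨by simp [closedHalfSpace], hz.2⟩
  have h2 := h1.enorm
  refine ⟨_, h2.measurable_piecewise (g := fun _ => 0) continuousOn_const
    (MeasurableSet.univ.prod measurableSet_Ioo), ?_⟩
  intro y s hs
  rw [Set.piecewise_eq_of_mem _ _ _ (by simpa using hs)]

/-- let `1 ≤ q < ∞` and `p ∈ (Nq/(N-1), ∞)`. There exists `C > 0`,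
independent of `T` and `M`, such that for all `T > 0`, `M ≥ 1` and `v ∈ X_{T,M}`:
`‖F[v](·,t)‖_{L^p(ℝ^N_+)} ≤ C (1 + t^{1/p}) t^{-1/2} e^{Mt} ‖v‖_{X_{T,M}}`
for all `0 < t < T`. -/
theorem stmt_3 (N : ℕ) (hN : 2 ≤ N) (q p : ℝ≥0∞) (hq1 : 1 ≤ q) (hq2 : q ≠ ∞)
    (hp1 : (N : ℝ≥0∞) * q / ((N : ℝ≥0∞) - 1) < p) (hp2 : p ≠ ∞) :
    ∃ C : ℝ, 0 < C ∧ ∀ T M : ℝ, 0 < T → 1 ≤ M → ∀ v : HS N → ℝ → ℝ,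
      memX N q p T M v → ∀ t ∈ Ioo (0 : ℝ) T,
        hLpNorm N p (fun x => Fop N v x t) ≤
          ENNReal.ofReal
              (C * (1 + t ^ (p⁻¹).toReal) * t ^ (-(1 : ℝ) / 2) * Real.exp (M * t)) *
            XNorm N q p T M v := by
  have hq0 : q ≠ 0 := (zero_lt_one.trans_le hq1).ne'
  have hN1 : (2 : ℝ) ≤ N := by exact_mod_cast hN
  have hqr : 1 ≤ q.toReal := by
    simpa using ENNReal.toReal_mono hq2 hq1
  have hlt : N * q.toReal < p.toReal * (N - 1) := by
    have h := (ENNReal.toReal_lt_toReal (ne_top_of_lt hp1) hp2).2 hp1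
    rw [ENNReal.toReal_div, ENNReal.toReal_mul, ENNReal.toReal_natCast,
      ENNReal.toReal_sub_of_le (by exact_mod_cast (by omega : 1 ≤ N)) (by simp),
      ENNReal.toReal_natCast, ENNReal.toReal_one, div_lt_iff₀ (by linarith)] at h
    exact h
  have hqp' : q.toReal < p.toReal := by nlinarith
  have hqp : q ≤ p := ((ENNReal.toReal_lt_toReal hq2 hp2).1 hqp').le
  have hp : 1 < p.toReal := by linarith
  have hp0 : 0 < p.toReal := by linarith
  have hpne : p ≠ 0 := fun h => by simp [h] at hp0
  have hp1' : 1 ≤ p := hq1.trans hqp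
  have hK := KI_ne_top N hN
  obtain ⟨CA, hCA, hA⟩ := Aterm N hN hqr hlt
  set P := p.toReal with hP
  set D1 : ℝ≥0∞ := ‖PC N‖ₑ * CA ^ (1 / P) with hD1
  set c : ℝ := 2 * 2 ^ (1 - 1 / P) + P * 2 ^ ((1 : ℝ) / 2) with hc
  have hc0 : 0 ≤ c := by positivity
  set c2 : ℝ≥0∞ := ENNReal.ofReal (2 * N) * ‖PC N‖ₑ with hc2
  set D2 : ℝ≥0∞ := c2 * KI N * ENNReal.ofReal (1 / (P - 1)) ^ (1 / P) * ENNReal.ofReal c with hD2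
  have hi : 0 ≤ 1 / P := by positivity
  have hD1t : D1 ≠ ∞ := ENNReal.mul_ne_top (by simp) (ENNReal.rpow_ne_top_of_nonneg hi hCA)
  have hc2t : c2 ≠ ∞ := ENNReal.mul_ne_top ENNReal.ofReal_ne_top (by simp)
  have hD2t : D2 ≠ ∞ := ENNReal.mul_ne_top (ENNReal.mul_ne_top (ENNReal.mul_ne_top hc2t hK)
    (ENNReal.rpow_ne_top_of_nonneg hi ENNReal.ofReal_ne_top)) ENNReal.ofReal_ne_top
  have pcancel : ∀ a : ℝ≥0∞, (a ^ P) ^ (1 / P) = a := by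
    intro a
    rw [← ENNReal.rpow_mul, mul_one_div_cancel hp0.ne', ENNReal.rpow_one]
  refine ⟨D1.toReal + D2.toReal + 1, by positivity, ?_⟩
  intro T M hT hM v hv t ht
  obtain ⟨H, hHm, hH⟩ := H_exists N hv.2.1
  set X := XNorm N q p T M v with hX
  set Y := ENNReal.ofReal (Real.exp (M * t)) * X with hY
  have ht0 := ht.1
  have hHle : ∀ r ∈ Icc q p, ∀ s, 0 < s → s ≤ t →
      ∫⁻ y, H (y, s) ^ r.toReal ≤ (ENNReal.ofReal (s ^ (-(1 : ℝ) / 2)) * Y) ^ r.toReal := by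
    intro r hr s hs0 hst
    have hs : s ∈ Ioo 0 T := ⟨hs0, hst.trans_lt ht.2⟩
    simp_rw [fun y => hH y s hs]
    exact lint_le N (hq1.trans hr.1) (ne_top_of_le_ne_top hp2 hr.2) (bnorm_le N hr hs hst hM)
  have hHt : Measurable (fun y => H (y, t)) := hHm.comp measurable_prodMk_right
  have eA := hA (fun y => H (y, t)) _ hHt (hHle q ⟨le_rfl, hqp⟩ t ht0 le_rfl)
    (hHle p ⟨hqp, le_rfl⟩ t ht0 le_rfl)
  have eB := Bterm N hN hp hHm ht0 (Y := Y)
    (fun s hs => hHle p ⟨hqp, le_rfl⟩ s hs.1 hs.2.le)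
  set fA : HS N → ℝ≥0∞ := fun x => cv N x.2 (fun y => H (y, t)) x.1 with hfA
  set fB : HS N → ℝ≥0∞ := fun x => ∫⁻ s in Ioo 0 t, ENNReal.ofReal ((x.2 + (t - s))⁻¹) *
        cv N (x.2 + (t - s)) (fun y => H (y, s)) x.1 with hfB
  have mA : Measurable fA :=
    cv_joint_meas N (g := fun (_ : HS N) y => H (y, t)) measurable_snd measurable_fst
      (hHt.comp measurable_snd)
  have mB : Measurable fB := (Bterm_meas N hHm t).lintegral_prod_right'
  have hhs : MeasurableSet (halfSpace N) := measurableSet_lt measurable_const measurable_snd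
  have bA : (∫⁻ x in halfSpace N, (‖PC N‖ₑ * fA x) ^ P) ^ (1 / P) ≤
      D1 * (ENNReal.ofReal (t ^ (-(1 : ℝ) / 2)) * Y) := by
    simp_rw [ENNReal.mul_rpow_of_nonneg _ _ hp0.le]
    rw [lintegral_const_mul _ (mA.pow_const P)]
    calc _ ≤ (‖PC N‖ₑ ^ P * (CA * (ENNReal.ofReal (t ^ (-(1 : ℝ) / 2)) * Y) ^ P)) ^ (1 / P) :=
          ENNReal.rpow_le_rpow (mul_le_mul' le_rfl eA) hi
      _ = _ := by
          rw [ENNReal.mul_rpow_of_nonneg _ _ hi, ENNReal.mul_rpow_of_nonneg _ _ hi, pcancel, pcancel,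
            hD1, mul_assoc]
  have bB : (∫⁻ x in halfSpace N, (c2 * fB x) ^ P) ^ (1 / P) ≤
      D2 * (ENNReal.ofReal (t ^ (-(1 : ℝ) / 2 + 1 / P)) * Y) := by
    simp_rw [ENNReal.mul_rpow_of_nonneg _ _ hp0.le]
    rw [lintegral_const_mul _ (mB.pow_const P)]
    calc _ ≤ _ := ENNReal.rpow_le_rpow (mul_le_mul' le_rfl eB) hi
      _ = _ := by
          rw [ENNReal.mul_rpow_of_nonneg _ _ hi, ENNReal.mul_rpow_of_nonneg _ _ hi,
            ENNReal.mul_rpow_of_nonneg _ _ hi, ENNReal.mul_rpow_of_nonneg _ _ hi,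
            pcancel, pcancel, pcancel, pcancel, ENNReal.ofReal_mul hc0, hD2]
          ring
  have tot : hLpNorm N p (fun x => Fop N v x t) ≤
      D1 * (ENNReal.ofReal (t ^ (-(1 : ℝ) / 2)) * Y) +
      D2 * (ENNReal.ofReal (t ^ (-(1 : ℝ) / 2 + 1 / P)) * Y) := by
    unfold hLpNorm
    rw [eLpNorm_eq_lintegral_rpow_enorm_toReal hpne hp2]
    refine le_trans ?_ (add_le_add bA bB)
    refine le_trans ?_ (ENNReal.lintegral_Lp_add_le (mA.const_mul _).aemeasurable
      (mB.const_mul _).aemeasurable hp.le)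
    refine ENNReal.rpow_le_rpow ?_ hi
    refine setLIntegral_mono' hhs fun x hx => ENNReal.rpow_le_rpow ?_ hp0.le
    exact Fop_enorm_le N hN v x hx t (fun y s h1 h2 => hH y s ⟨h1, h2.trans_lt ht.2⟩) hHm ht0
  refine tot.trans ?_
  have hpi : (p⁻¹).toReal = 1 / P := by rw [ENNReal.toReal_inv, one_div]
  rw [hpi, hY, ← ENNReal.ofReal_toReal hD1t, ← ENNReal.ofReal_toReal hD2t]
  simp only [ENNReal.toReal_ofReal ENNReal.toReal_nonneg]
  have d1 := ENNReal.toReal_nonneg (a := D1)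
  have d2 := ENNReal.toReal_nonneg (a := D2)
  generalize D1.toReal = d at d1 ⊢
  generalize D2.toReal = e at d2 ⊢
  rw [← mul_assoc, ← mul_assoc, ← mul_assoc, ← mul_assoc, ← add_mul,
    ← ENNReal.ofReal_mul d1, ← ENNReal.ofReal_mul d2, ← ENNReal.ofReal_mul (by positivity),
    ← ENNReal.ofReal_mul (by positivity), ← ENNReal.ofReal_add (by positivity) (by positivity)]
  refine mul_le_mul' (ENNReal.ofReal_le_ofReal ?_) le_rfl
  rw [Real.rpow_add ht0]
  have n1 : 0 ≤ t ^ (-(1 : ℝ) / 2) := by positivity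
  have n2 : 0 ≤ t ^ (1 / P) := by positivity
  rw [← add_mul]
  refine mul_le_mul_of_nonneg_right ?_ (Real.exp_pos _).le
  have : d * t ^ (-(1 : ℝ) / 2) + e * (t ^ (-(1 : ℝ) / 2) * t ^ (1 / P)) =
      (d + e * t ^ (1 / P)) * t ^ (-(1 : ℝ) / 2) := by ring
  rw [this]
  refine mul_le_mul_of_nonneg_right ?_ n1
  nlinarith [mul_nonneg d1 n2, mul_nonneg d2 n2]

end
end

section
/- Let N ≥ 2, T > 0, M ≥ 1, 1 ≤ q < ∞, and p ∈ (Nq/(N−1), ∞]. Assume v ∈ X_{T,M}. Then there exists C > 0, independent of T and M, such that for any r ∈ [q,p], ‖F[v](·,x_N,t)‖_{L^r(ℝ^{N−1})} ≤ C (1 + (x_N^{−1} t)^{1/2}) t^{−1/2} e^{Mt} ‖v‖_{X_{T,M}} for all x_N ∈ (0,∞) and 0 < t < T. -/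
open MeasureTheory Real Set ENNReal

noncomputable section

theorem mink_aux {α Z : Type*} [MeasurableSpace α] [MeasurableSpace Z] (μ : Measure α)
    (ν : Measure Z) [SFinite μ] [SFinite ν] (r : ℝ≥0∞) (hr : 1 ≤ r) (h : α × Z → ℝ≥0∞)
    (hh : Measurable h) (a : Z → ℝ≥0∞) (ha : Measurable a)
    (hb : ∀ᵐ z ∂ν, eLpNorm (fun x => h (x, z)) r μ ≤ a z ∧ a z ≠ 0 ∧ a z ≠ ∞) :
    eLpNorm (fun x => ∫⁻ z, h (x, z) ∂ν) r μ ≤ ∫⁻ z, a z ∂ν := by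
  by_cases hrt : r = ∞
  · subst hrt
    have h1 : ∀ᵐ z ∂ν, ∀ᵐ x ∂μ, h (x, z) ≤ a z := by
      filter_upwards [hb] with z hz
      filter_upwards [enorm_ae_le_eLpNormEssSup (fun x => h (x, z)) μ] with x hx
      simp only [eLpNorm_exponent_top] at hz
      exact (le_trans hx hz.1)
    have h2 : ∀ᵐ x ∂μ, ∀ᵐ z ∂ν, h (x, z) ≤ a z := by
      rw [Measure.ae_ae_comm]
      · exact h1
      · exact measurableSet_le hh (ha.comp measurable_snd)
    rw [eLpNorm_exponent_top]
    refine eLpNormEssSup_le_of_ae_enorm_bound ?_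
    filter_upwards [h2] with x hx
    exact lintegral_mono_ae hx
  · have hr0 : r ≠ 0 := (lt_of_lt_of_le one_pos hr).ne'
    set p := r.toReal with hp
    have hp1 : 1 ≤ p := by
      rw [hp, ← ENNReal.toReal_one]
      exact (ENNReal.toReal_le_toReal (by simp) hrt).2 hr
    have hp0 : 0 < p := by linarith
    rw [eLpNorm_eq_lintegral_rpow_enorm_toReal hr0 hrt, ← hp]
    simp only [enorm_eq_self]
    have hb' : ∀ᵐ z ∂ν, ∫⁻ x, h (x, z) ^ p ∂μ ≤ a z ^ p ∧ a z ≠ 0 ∧ a z ≠ ∞ := by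
      filter_upwards [hb] with z hz
      refine ⟨?_, hz.2⟩
      have := hz.1
      rw [eLpNorm_eq_lintegral_rpow_enorm_toReal hr0 hrt, ← hp] at this
      simp only [enorm_eq_self] at this
      rw [one_div] at this
      exact (ENNReal.rpow_inv_le_iff hp0).1 this
    rw [one_div, ENNReal.rpow_inv_le_iff hp0]
    set A := ∫⁻ z, a z ∂ν with hA
    have hfm : Measurable (fun w : α × Z => h w ^ p * a w.2 ^ (1 - p)) :=
      (hh.pow_const _).mul ((ha.comp measurable_snd).pow_const _)
    calc ∫⁻ x, (∫⁻ z, h (x, z) ∂ν) ^ p ∂μ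
        ≤ ∫⁻ x, A ^ (p - 1) * ∫⁻ z, h (x, z) ^ p * a z ^ (1 - p) ∂ν ∂μ := by
          refine lintegral_mono fun x => ?_
          have e1 : ∫⁻ z, h (x, z) ∂ν =
              ∫⁻ z, a z ^ (1 - p⁻¹) * (h (x, z) ^ p * a z ^ (1 - p)) ^ p⁻¹ ∂ν := by
            refine lintegral_congr_ae ?_
            filter_upwards [hb'] with z hz
            rw [ENNReal.mul_rpow_of_nonneg _ _ (by positivity), ← ENNReal.rpow_mul,
              ← ENNReal.rpow_mul, mul_inv_cancel₀ hp0.ne', ENNReal.rpow_one, mul_left_comm,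
              ← ENNReal.rpow_add _ _ hz.2.1 hz.2.2]
            have : 1 - p⁻¹ + (1 - p) * p⁻¹ = 0 := by field_simp; ring
            rw [this, ENNReal.rpow_zero, mul_one]
          have e2 := ENNReal.lintegral_mul_norm_pow_le (μ := ν) (f := a)
            (g := fun z => h (x, z) ^ p * a z ^ (1 - p)) ha.aemeasurable
            (hfm.comp measurable_prodMk_left).aemeasurable (p := 1 - p⁻¹) (q := p⁻¹)
            (by rw [sub_nonneg]; exact inv_le_one_of_one_le₀ hp1) (by positivity) (by ring)
          rw [e1]
          refine (ENNReal.rpow_le_rpow e2 hp0.le).trans (le_of_eq ?_)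
          rw [ENNReal.mul_rpow_of_nonneg _ _ hp0.le, ← ENNReal.rpow_mul, ← ENNReal.rpow_mul,
            inv_mul_cancel₀ hp0.ne', ENNReal.rpow_one]
          congr 2
          field_simp
      _ = A ^ (p - 1) * ∫⁻ z, ∫⁻ x, h (x, z) ^ p * a z ^ (1 - p) ∂μ ∂ν := by
          rw [lintegral_const_mul _ hfm.lintegral_prod_right']
          congr 1
          exact lintegral_lintegral_swap hfm.aemeasurable
      _ ≤ A ^ (p - 1) * A := by
          gcongr
          refine lintegral_mono_ae ?_
          filter_upwards [hb'] with z hz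
          have hm : Measurable (fun x => h (x, z) ^ p) :=
            (hh.comp measurable_prodMk_right).pow_const _
          rw [lintegral_mul_const _ hm]
          refine (mul_le_mul_left hz.1 _).trans (le_of_eq ?_)
          rw [← ENNReal.rpow_add _ _ hz.2.1 hz.2.2]
          simp
      _ = A ^ p := by
          conv_lhs => enter [2]; rw [← ENNReal.rpow_one A]
          rw [← ENNReal.rpow_add_of_nonneg _ _ (by linarith) (by linarith)]
          congr 1; ring

theorem young_aux (N : ℕ) (r : ℝ≥0∞) (hr : 1 ≤ r) (k G : E' N → ℝ≥0∞) (hk : Measurable k)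
    (hk0 : ∀ z, k z ≠ 0 ∧ k z ≠ ∞) (hG : Measurable G) (A : ℝ≥0∞) (hA : A ≠ 0 ∧ A ≠ ∞)
    (hGA : eLpNorm G r volume ≤ A) :
    eLpNorm (fun x => ∫⁻ z, k z * G (x - z)) r volume ≤ (∫⁻ z, k z) * A := by
  rw [← lintegral_mul_const _ hk]
  refine mink_aux (volume : Measure (E' N)) volume r hr (fun w => k w.2 * G (w.1 - w.2))
    (by fun_prop) (fun z => k z * A) (by fun_prop) (Filter.Eventually.of_forall fun z => ?_)
  refine ⟨?_, mul_ne_zero (hk0 z).1 hA.1, ENNReal.mul_ne_top (hk0 z).2 hA.2⟩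
  obtain ⟨c, hc⟩ : ∃ c : NNReal, (c : ℝ≥0∞) = k z := ⟨(k z).toNNReal, ENNReal.coe_toNNReal (hk0 z).2⟩
  have h1 : eLpNorm (fun x => G (x - z)) r volume = eLpNorm G r volume :=
    eLpNorm_comp_measurePreserving hG.aestronglyMeasurable (measurePreserving_sub_right volume z)
  have h2 : eLpNorm (fun x => k z * G (x - z)) r volume
      ≤ c • eLpNorm (fun x => G (x - z)) r volume := by
    refine eLpNorm_le_nnreal_smul_eLpNorm_of_ae_le_mul' (Filter.Eventually.of_forall fun x => ?_) r
    simp [hc]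
  refine h2.trans ?_
  rw [h1, ENNReal.smul_def, smul_eq_mul, hc]
  gcongr

theorem Pbase_int (N : ℕ) (hN : 2 ≤ N) :
    Integrable (fun z : E' N => (1 + ‖z‖ ^ 2) ^ (-(N : ℝ) / 2)) := by
  refine integrable_rpow_neg_one_add_norm_sq ?_
  simp only [finrank_euclideanSpace, Fintype.card_fin]
  exact_mod_cast (by omega : N - 1 < N)

theorem PC_pos (N : ℕ) (hN : 2 ≤ N) : 0 < PC N := by
  unfold PC
  rw [inv_pos]
  rw [integral_pos_iff_support_of_nonneg (fun z => by positivity) (Pbase_int N hN)]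
  have : Function.support (fun z : E' N => (1 + ‖z‖ ^ 2) ^ (-(N : ℝ) / 2)) = univ := by
    ext z; simp only [Function.mem_support, mem_univ, iff_true]; positivity
  rw [this, Measure.measure_univ_pos]
  exact NeZero.ne _

theorem Pker_pos (N : ℕ) (hN : 2 ≤ N) (z : E' N) (xN t : ℝ) (h : 0 < xN + t) :
    0 < Pker N z xN t := by
  have := PC_pos N hN
  unfold Pker
  positivity

theorem Pker_lint (N : ℕ) (hN : 2 ≤ N) (xN t : ℝ) (h : 0 < xN + t) :
    ∫⁻ z : E' N, ENNReal.ofReal (Pker N z xN t) = 1 := by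
  set R := xN + t with hR
  have e : ∀ z : E' N, Pker N z xN t =
      (PC N * R ^ ((1 : ℝ) - N)) * (fun w : E' N => (1 + ‖w‖ ^ 2) ^ (-(N : ℝ) / 2)) (R⁻¹ • z) := by
    intro z
    simp only [Pker, ← hR, norm_smul, norm_inv, Real.norm_eq_abs, abs_of_pos h]
    congr 2
    field_simp
  have hi : Integrable (fun z : E' N => Pker N z xN t) := by
    simp_rw [e]
    exact ((Pbase_int N hN).comp_smul (inv_ne_zero h.ne')).const_mul _
  rw [← ofReal_integral_eq_lintegral_ofReal hi
    (Filter.Eventually.of_forall fun z => (Pker_pos N hN z xN t h).le)]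
  simp_rw [e]
  rw [integral_const_mul, Measure.integral_comp_inv_smul_of_nonneg volume
    (fun w : E' N => (1 + ‖w‖ ^ 2) ^ (-(N : ℝ) / 2)) h.le]
  have h0 := PC_pos N hN
  have h1 : PC N * (∫ z : E' N, (1 + ‖z‖ ^ 2) ^ (-(N : ℝ) / 2)) = 1 := by
    unfold PC at h0 ⊢
    exact inv_mul_cancel₀ (inv_pos.1 h0).ne'
  rw [finrank_euclideanSpace, Fintype.card_fin, smul_eq_mul]
  have h2 : R ^ ((1 : ℝ) - N) * R ^ (N - 1) = 1 := by
    rw [← Real.rpow_natCast, ← Real.rpow_add h, Nat.cast_sub (by omega)]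
    simp
  rw [show ∀ I : ℝ, PC N * R ^ ((1 : ℝ) - N) * (R ^ (N - 1) * I) =
    (R ^ ((1 : ℝ) - N) * R ^ (N - 1)) * (PC N * I) from fun I => by ring, h1, h2]
  simp

theorem Pker_deriv (N : ℕ) (hN : 2 ≤ N) (z : E' N) (xN t : ℝ) (h : 0 < xN + t) :
    |deriv (fun τ => Pker N z xN τ) t| ≤ 2 * N * (xN + t)⁻¹ * Pker N z xN t := by
  have hP := PC_pos N hN
  set R := xN + t with hR
  set B := 1 + ‖z‖ ^ 2 / R ^ 2 with hB
  have hBpos : 0 < B := by positivity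
  have hd0 : HasDerivAt (fun τ : ℝ => xN + τ) 1 t := (hasDerivAt_id t).const_add xN
  have hd1 : HasDerivAt (fun τ : ℝ => (xN + τ) ^ ((1 : ℝ) - N))
      (1 * ((1 : ℝ) - N) * R ^ ((1 : ℝ) - N - 1)) t :=
    hd0.rpow_const (Or.inl h.ne')
  have hd2 : HasDerivAt (fun τ : ℝ => 1 + ‖z‖ ^ 2 / (xN + τ) ^ 2)
      (-2 * (‖z‖ ^ 2 / R ^ 2) * R⁻¹) t := by
    have := ((hasDerivAt_const t (‖z‖ ^ 2)).div (hd0.pow 2) (pow_ne_zero 2 h.ne')).const_add 1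
    refine this.congr_deriv ?_
    simp only [Pi.pow_apply, ← hR]
    simp
    field_simp
  have hd3 := hd2.rpow_const (p := -(N : ℝ) / 2) (Or.inl hBpos.ne')
  have hd := (hd1.const_mul (PC N)).mul hd3
  have e : deriv (fun τ => Pker N z xN τ) t = Pker N z xN t * R⁻¹ *
      ((1 - N) + N * ((‖z‖ ^ 2 / R ^ 2) / B)) := by
    refine hd.deriv.trans ?_
    simp only [Pker, ← hR, ← hB]
    rw [Real.rpow_sub_one h.ne', Real.rpow_sub_one hBpos.ne']
    field_simp
  have hN' : (2 : ℝ) ≤ N := by exact_mod_cast hN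
  have hu0 : 0 ≤ (‖z‖ ^ 2 / R ^ 2) / B := by positivity
  have hu1 : (‖z‖ ^ 2 / R ^ 2) / B ≤ 1 := by
    rw [div_le_one hBpos, hB]; linarith
  have hpk := Pker_pos N hN z xN t h
  rw [e, abs_mul, abs_of_pos (by positivity)]
  have : |((1 : ℝ) - N) + N * ((‖z‖ ^ 2 / R ^ 2) / B)| ≤ 2 * N := by
    rw [abs_le]
    constructor <;> nlinarith
  calc _ ≤ Pker N z xN t * R⁻¹ * (2 * N) := by gcongr
    _ = _ := by ring

theorem time_int (xN t : ℝ) (hx : 0 < xN) (ht : 0 < t) :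
    ∫⁻ s in Ioo (0 : ℝ) t, ENNReal.ofReal ((xN + (t - s))⁻¹ * s ^ (-(1 : ℝ) / 2)) ≤
      ENNReal.ofReal (4 * (1 + (xN⁻¹ * t) ^ ((1 : ℝ) / 2)) * t ^ (-(1 : ℝ) / 2)) := by
  set c : ℝ := (t / 2) ^ (-(1 : ℝ) / 2) * xN ^ (-(1 : ℝ) / 2) with hc
  have hc0 : 0 ≤ c := by positivity
  have ii : IntervalIntegrable (fun s : ℝ => s ^ (-(1 : ℝ) / 2)) volume 0 t :=
    intervalIntegral.intervalIntegrable_rpow' (by norm_num)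
  have ii2 : IntervalIntegrable (fun s : ℝ => (t - s) ^ (-(1 : ℝ) / 2)) volume 0 t := by
    have := (ii.comp_sub_left t).symm
    simpa using this
  have iint : ∫ s in (0 : ℝ)..t, s ^ (-(1 : ℝ) / 2) = 2 * t ^ ((1 : ℝ) / 2) := by
    rw [integral_rpow (Or.inl (by norm_num))]
    norm_num
    ring
  have iint2 : ∫ s in (0 : ℝ)..t, (t - s) ^ (-(1 : ℝ) / 2) = 2 * t ^ ((1 : ℝ) / 2) := by
    rw [intervalIntegral.integral_comp_sub_left (fun s => s ^ (-(1 : ℝ) / 2))]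
    simpa using iint
  have hI := (ii.const_mul (2 / t)).add (ii2.const_mul c)
  have hle : ∀ s ∈ Ioo (0 : ℝ) t, (xN + (t - s))⁻¹ * s ^ (-(1 : ℝ) / 2) ≤
      2 / t * s ^ (-(1 : ℝ) / 2) + c * (t - s) ^ (-(1 : ℝ) / 2) := by
    rintro s ⟨hs0, hst⟩
    have hts : 0 < t - s := by linarith
    rcases le_total s (t / 2) with h | h
    · have : (xN + (t - s))⁻¹ ≤ 2 / t := by
        rw [show 2 / t = (t / 2)⁻¹ by field_simp]
        exact inv_anti₀ (by positivity) (by linarith)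
      have h2 : 0 ≤ c * (t - s) ^ (-(1 : ℝ) / 2) := by positivity
      have h3 : 0 ≤ s ^ (-(1 : ℝ) / 2) := by positivity
      nlinarith [mul_le_mul_of_nonneg_right this h3]
    · have h1 : s ^ (-(1 : ℝ) / 2) ≤ (t / 2) ^ (-(1 : ℝ) / 2) :=
        Real.rpow_le_rpow_of_nonpos (by positivity) h (by norm_num)
      have h2 : (xN + (t - s))⁻¹ ≤ xN ^ (-(1 : ℝ) / 2) * (t - s) ^ (-(1 : ℝ) / 2) := by
        have e1 : (xN + (t - s))⁻¹ =
            (xN + (t - s)) ^ (-(1 : ℝ) / 2) * (xN + (t - s)) ^ (-(1 : ℝ) / 2) := by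
          rw [← Real.rpow_add (by positivity), ← Real.rpow_neg_one]; norm_num
        rw [e1]
        gcongr ?_ * ?_
        · exact Real.rpow_le_rpow_of_nonpos (by positivity) (by linarith) (by norm_num)
        · exact Real.rpow_le_rpow_of_nonpos (by positivity) (by linarith) (by norm_num)
      have h3 : 0 ≤ 2 / t * s ^ (-(1 : ℝ) / 2) := by positivity
      have h4 := mul_le_mul h2 h1 (by positivity) (by positivity)
      rw [hc]
      nlinarith
  calc _ ≤ ∫⁻ s in Ioo (0 : ℝ) t, ENNReal.ofReal
          (2 / t * s ^ (-(1 : ℝ) / 2) + c * (t - s) ^ (-(1 : ℝ) / 2)) :=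
        setLIntegral_mono' measurableSet_Ioo fun s hs => ENNReal.ofReal_le_ofReal (hle s hs)
    _ = ENNReal.ofReal (∫ s in (0 : ℝ)..t,
          (2 / t * s ^ (-(1 : ℝ) / 2) + c * (t - s) ^ (-(1 : ℝ) / 2))) := by
        rw [intervalIntegral.integral_of_le ht.le, ← integral_Ioc_eq_integral_Ioo.symm,
          ofReal_integral_eq_lintegral_ofReal]
        · exact (intervalIntegrable_iff_integrableOn_Ioo_of_le ht.le).1 hI
        · refine (ae_restrict_iff' measurableSet_Ioo).2 (Filter.Eventually.of_forall ?_)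
          rintro s ⟨hs0, hst⟩
          have hts : 0 < t - s := by linarith
          simp only [Pi.zero_apply]
          positivity
    _ ≤ _ := by
        apply ENNReal.ofReal_le_ofReal
        rw [intervalIntegral.integral_add (ii.const_mul (2 / t)) (ii2.const_mul c),
          intervalIntegral.integral_const_mul, intervalIntegral.integral_const_mul, iint, iint2, hc]
        have k1 : t ^ ((1 : ℝ) / 2) = t * t ^ (-(1 : ℝ) / 2) := by
          conv_rhs => enter [1]; rw [← Real.rpow_one t]
          rw [← Real.rpow_add ht]; norm_num
        have k2 : xN ^ (-(1 : ℝ) / 2) = (xN⁻¹) ^ ((1 : ℝ) / 2) := by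
          rw [Real.inv_rpow hx.le, ← Real.rpow_neg hx.le]; norm_num
        have k3 : (t / 2) ^ (-(1 : ℝ) / 2) ≤ 2 * t ^ (-(1 : ℝ) / 2) := by
          rw [Real.div_rpow ht.le (by norm_num), div_eq_mul_inv, ← Real.rpow_neg (by norm_num),
            mul_comm]
          gcongr
          calc (2 : ℝ) ^ (-(-(1 : ℝ) / 2)) ≤ 2 ^ (1 : ℝ) :=
                Real.rpow_le_rpow_of_exponent_le (by norm_num) (by norm_num)
            _ = 2 := by norm_num
        rw [k2, Real.mul_rpow (by positivity) ht.le]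
        have k4 : 2 / t * (2 * t ^ ((1 : ℝ) / 2)) = 4 * t ^ (-(1 : ℝ) / 2) := by
          rw [k1]; field_simp; ring
        have k5 : 0 ≤ xN⁻¹ ^ ((1 : ℝ) / 2) * t ^ ((1 : ℝ) / 2) := by positivity
        rw [k4]
        nlinarith [mul_le_mul_of_nonneg_right k3 k5]

theorem trace_bound (N : ℕ) (q p : ℝ≥0∞) (T M : ℝ) (v : HS N → ℝ → ℝ) (r : ℝ≥0∞)
    (hqr : q ≤ r) (hrp : r ≤ p) (s : ℝ) (hs : s ∈ Ioo (0 : ℝ) T) :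
    eLpNorm (fun x' : E' N => dN N v (x', 0) s) r volume ≤
      ENNReal.ofReal (s ^ (-(1 : ℝ) / 2) * Real.exp (M * s)) * XNorm N q p T M v := by
  have h1 : ENNReal.ofReal (Real.exp (-M * s)) * (ENNReal.ofReal (s ^ ((1 : ℝ) / 2)) *
      eLpNorm (fun x' : E' N => dN N v (x', 0) s) r volume) ≤ XNorm N q p T M v := by
    refine le_trans ?_ (le_iSup₂_of_le (f := fun t (_ : t ∈ Ioo (0 : ℝ) T) =>
      ENNReal.ofReal (Real.exp (-M * t)) * Enorm N q p v t) s hs le_rfl)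
    gcongr
    unfold Enorm
    refine le_trans ?_ le_add_self
    exact le_iSup₂_of_le (f := fun r (_ : r ∈ Icc q p) => ENNReal.ofReal (s ^ ((1 : ℝ) / 2)) *
      bLpNorm N r (fun x' => dN N v (x', 0) s)) r ⟨hqr, hrp⟩ le_rfl
  have hs0 : 0 < s := hs.1
  calc _ = ENNReal.ofReal (s ^ (-(1 : ℝ) / 2) * Real.exp (M * s)) *
        (ENNReal.ofReal (Real.exp (-M * s)) * (ENNReal.ofReal (s ^ ((1 : ℝ) / 2)) *
      eLpNorm (fun x' : E' N => dN N v (x', 0) s) r volume)) := by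
        rw [← mul_assoc, ← mul_assoc, ← ENNReal.ofReal_mul (by positivity),
          ← ENNReal.ofReal_mul (by positivity)]
        have : s ^ (-(1 : ℝ) / 2) * Real.exp (M * s) * Real.exp (-M * s) * s ^ ((1 : ℝ) / 2)
            = 1 := by
          have a1 : Real.exp (M * s) * Real.exp (-M * s) = 1 := by
            rw [← Real.exp_add]; simp
          have a2 : s ^ (-(1 : ℝ) / 2) * s ^ ((1 : ℝ) / 2) = 1 := by
            rw [← Real.rpow_add hs0]; norm_num
          calc _ = (s ^ (-(1 : ℝ) / 2) * s ^ ((1 : ℝ) / 2)) *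
                (Real.exp (M * s) * Real.exp (-M * s)) := by ring
            _ = 1 := by rw [a1, a2, one_mul]
        rw [this]; simp
    _ ≤ _ := by gcongr

theorem main_aux (N : ℕ) (hN : 2 ≤ N) (q p : ℝ≥0∞) (hq1 : 1 ≤ q)
    (T M : ℝ) (hM : 1 ≤ M) (v : HS N → ℝ → ℝ)
    (hv : memX N q p T M v) (r : ℝ≥0∞) (hqr : q ≤ r) (hrp : r ≤ p)
    (xN : ℝ) (hx : 0 < xN) (t : ℝ) (ht : t ∈ Ioo (0 : ℝ) T) (K : ℝ≥0∞)
    (hK : XNorm N q p T M v ≤ K) (hK0 : K ≠ 0) (hKt : K ≠ ∞) :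
    bLpNorm N r (fun x' : E' N => Fop N v (x', xN) t) ≤
      ENNReal.ofReal ((1 + 8 * N) * (1 + (xN⁻¹ * t) ^ ((1 : ℝ) / 2)) * t ^ (-(1 : ℝ) / 2) *
                  Real.exp (M * t)) * K := by
  have hr : 1 ≤ r := hq1.trans hqr
  have ht0 : 0 < t := ht.1
  set G : E' N × ℝ → ℝ≥0∞ :=
    (univ ×ˢ Ioo 0 T).indicator (fun w => ‖dN N v (w.1, 0) w.2‖ₑ) with hG
  have hGeq : ∀ y, ∀ s ∈ Ioo (0 : ℝ) T, G (y, s) = ‖dN N v (y, 0) s‖ₑ := by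
    intro y s hs
    rw [hG, indicator_of_mem]
    exact ⟨mem_univ _, hs⟩
  have hGm : Measurable G := by
    have hc : ContinuousOn (fun w : E' N × ℝ => ‖dN N v (w.1, 0) w.2‖ₑ) (univ ×ˢ Ioo 0 T) := by
      refine continuous_enorm.comp_continuousOn ?_
      refine hv.2.1.comp (f := fun w : E' N × ℝ => ((w.1, (0 : ℝ)), w.2)) (by fun_prop) ?_
      rintro ⟨y, s⟩ ⟨-, hs⟩
      exact ⟨by simp [closedHalfSpace], hs⟩
    have hms : MeasurableSet ((univ : Set (E' N)) ×ˢ Ioo (0 : ℝ) T) :=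
      MeasurableSet.univ.prod measurableSet_Ioo
    classical
    have := hc.measurable_piecewise (g := fun _ => (0 : ℝ≥0∞)) continuousOn_const hms
    rw [hG, ← piecewise_eq_indicator]
    exact this
  have hGb : ∀ s ∈ Ioo (0 : ℝ) T, eLpNorm (fun y => G (y, s)) r volume ≤
      ENNReal.ofReal (s ^ (-(1 : ℝ) / 2) * Real.exp (M * s)) * K := by
    intro s hs
    have e : (fun y => G (y, s)) = fun y => ‖dN N v (y, 0) s‖ₑ := by
      funext y; exact hGeq y s hs
    rw [e, eLpNorm_enorm]
    exact (trace_bound N q p T M v r hqr hrp s hs).trans (by gcongr)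
  have hPm : Measurable (fun w : E' N × ℝ => Pker N w.1 xN w.2) := by
    unfold Pker
    fun_prop
  set k : E' N → ℝ → ℝ≥0∞ := fun z τ => ENNReal.ofReal (Pker N z xN τ) with hk
  have hkm : Measurable (fun w : E' N × ℝ => k w.1 w.2) := hPm.ennreal_ofReal
  have hAne : ∀ s ∈ Ioo (0 : ℝ) T,
      ENNReal.ofReal (s ^ (-(1 : ℝ) / 2) * Real.exp (M * s)) * K ≠ 0 ∧
      ENNReal.ofReal (s ^ (-(1 : ℝ) / 2) * Real.exp (M * s)) * K ≠ ∞ := by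
    intro s hs
    have : 0 < s := hs.1
    refine ⟨mul_ne_zero ?_ hK0, ENNReal.mul_ne_top ENNReal.ofReal_ne_top hKt⟩
    rw [ENNReal.ofReal_ne_zero_iff]
    positivity
  have hY : ∀ τ, 0 ≤ τ → ∀ s ∈ Ioo (0 : ℝ) T,
      eLpNorm (fun x => ∫⁻ z, k z τ * G (x - z, s)) r volume ≤
        ENNReal.ofReal (s ^ (-(1 : ℝ) / 2) * Real.exp (M * s)) * K := by
    intro τ hτ s hs
    have := young_aux N r hr (fun z => k z τ) (fun y => G (y, s))
      (hkm.comp measurable_prodMk_right)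
      (fun z => ⟨by
        rw [hk, ENNReal.ofReal_ne_zero_iff]; exact Pker_pos N hN z xN τ (by positivity),
        ENNReal.ofReal_ne_top⟩) (hGm.comp measurable_prodMk_right) _ (hAne s hs) (hGb s hs)
    rw [Pker_lint N hN xN τ (by positivity), one_mul] at this
    exact this
  set H1 : E' N → ℝ≥0∞ := fun x => ∫⁻ z, k z 0 * G (x - z, t) with hH1
  set J : E' N × ℝ → ℝ≥0∞ := fun w => ENNReal.ofReal (2 * N * (xN + (t - w.2))⁻¹) *
    ∫⁻ z, k z (t - w.2) * G (w.1 - z, w.2) with hJ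
  set H2 : E' N → ℝ≥0∞ := fun x => ∫⁻ s in Ioo (0 : ℝ) t, J (x, s) with hH2
  have hJ0 : Measurable (fun w : E' N × ℝ => ∫⁻ z, k z (t - w.2) * G (w.1 - z, w.2)) := by
    have : Measurable (fun u : (E' N × ℝ) × E' N =>
        k u.2 (t - u.1.2) * G (u.1.1 - u.2, u.1.2)) := by
      refine Measurable.mul ?_ ?_
      · exact hkm.comp (f := fun u : (E' N × ℝ) × E' N => (u.2, t - u.1.2)) (by fun_prop)
      · exact hGm.comp (f := fun u : (E' N × ℝ) × E' N => (u.1.1 - u.2, u.1.2)) (by fun_prop)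
    exact this.lintegral_prod_right'
  have hJm : Measurable J := by
    refine Measurable.mul ?_ hJ0
    fun_prop
  have hH1m : Measurable H1 := by
    have : Measurable (fun u : E' N × E' N => k u.2 0 * G (u.1 - u.2, t)) := by
      refine Measurable.mul ?_ ?_
      · exact hkm.comp (f := fun u : E' N × E' N => (u.2, (0 : ℝ))) (by fun_prop)
      · exact hGm.comp (f := fun u : E' N × E' N => (u.1 - u.2, t)) (by fun_prop)
    exact this.lintegral_prod_right'
  have hH2m : Measurable H2 := hJm.lintegral_prod_right'
  have hpt : ∀ x, ‖Fop N v (x, xN) t‖ₑ ≤ ‖H1 x + H2 x‖ₑ := by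
    intro x
    rw [enorm_eq_self]
    unfold Fop
    refine (enorm_add_le _ _).trans (add_le_add ?_ ?_)
    · refine (enorm_integral_le_lintegral_enorm _).trans (le_of_eq ?_)
      rw [hH1]
      simp only
      rw [← lintegral_sub_left_eq_self (fun z => k z 0 * G (x - z, t)) x]
      refine lintegral_congr fun y => ?_
      rw [enorm_mul, _root_.sub_sub_cancel, hGeq _ _ ht, Real.enorm_of_nonneg]
      exact (Pker_pos N hN _ xN 0 (by positivity)).le
    · refine (enorm_integral_le_lintegral_enorm _).trans ?_
      refine setLIntegral_mono' measurableSet_Ioo fun s hs => ?_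
      have hsT : s ∈ Ioo (0 : ℝ) T := ⟨hs.1, hs.2.trans ht.2⟩
      have hts : 0 < t - s := by linarith [hs.2]
      refine (enorm_integral_le_lintegral_enorm _).trans ?_
      rw [hJ]
      simp only
      rw [← lintegral_sub_left_eq_self (fun z => k z (t - s) * G (x - z, s)) x,
        ← lintegral_const_mul' _ _ ENNReal.ofReal_ne_top]
      refine lintegral_mono fun y => ?_
      rw [enorm_mul, _root_.sub_sub_cancel, hGeq _ _ hsT, ← mul_assoc]
      refine mul_le_mul_left ?_ _
      rw [hk, Real.enorm_eq_ofReal_abs]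
      simp only
      rw [← ENNReal.ofReal_mul (by positivity)]
      exact ENNReal.ofReal_le_ofReal (Pker_deriv N hN (x - y) xN (t - s) (by positivity))
  have hb1 : eLpNorm H1 r volume ≤
      ENNReal.ofReal (t ^ (-(1 : ℝ) / 2) * Real.exp (M * t)) * K := hY 0 le_rfl t ht
  have hb2 : eLpNorm H2 r volume ≤ ENNReal.ofReal (2 * N * Real.exp (M * t) *
      (4 * (1 + (xN⁻¹ * t) ^ ((1 : ℝ) / 2)) * t ^ (-(1 : ℝ) / 2))) * K := by
    have hm := mink_aux (volume : Measure (E' N)) (volume.restrict (Ioo (0 : ℝ) t)) r hr J hJm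
      (fun s => ENNReal.ofReal (2 * N * (xN + (t - s))⁻¹) *
        (ENNReal.ofReal (s ^ (-(1 : ℝ) / 2) * Real.exp (M * s)) * K)) (by fun_prop) (by
        refine (ae_restrict_iff' measurableSet_Ioo).2 (Filter.Eventually.of_forall ?_)
        intro s hs
        have hsT : s ∈ Ioo (0 : ℝ) T := ⟨hs.1, hs.2.trans ht.2⟩
        have hts : 0 < t - s := by linarith [hs.2]
        have hNp : (0 : ℝ) < N := by exact_mod_cast (by omega : 0 < N)
        refine ⟨?_, mul_ne_zero ?_ (hAne s hsT).1,
          ENNReal.mul_ne_top ENNReal.ofReal_ne_top (hAne s hsT).2⟩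
        · have h2 : eLpNorm (fun x => J (x, s)) r volume ≤
              (2 * N * (xN + (t - s))⁻¹).toNNReal •
                eLpNorm (fun x => ∫⁻ z, k z (t - s) * G (x - z, s)) r volume := by
            refine eLpNorm_le_nnreal_smul_eLpNorm_of_ae_le_mul'
              (Filter.Eventually.of_forall fun x => ?_) r
            simp [hJ, ENNReal.ofReal]
          refine h2.trans ?_
          rw [ENNReal.smul_def, smul_eq_mul]
          exact mul_le_mul_right (hY (t - s) hts.le s hsT) _
        · rw [ENNReal.ofReal_ne_zero_iff]
          positivity)
    refine hm.trans ?_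
    calc _ ≤ ∫⁻ s in Ioo (0 : ℝ) t, ENNReal.ofReal (2 * N * Real.exp (M * t)) * K *
            ENNReal.ofReal ((xN + (t - s))⁻¹ * s ^ (-(1 : ℝ) / 2)) := by
          refine setLIntegral_mono' measurableSet_Ioo fun s hs => ?_
          have hs0 : 0 < s := hs.1
          have hts : 0 < t - s := by linarith [hs.2]
          rw [← mul_assoc, ← ENNReal.ofReal_mul (by positivity),
            mul_right_comm (ENNReal.ofReal (2 * N * Real.exp (M * t))),
            ← ENNReal.ofReal_mul (by positivity)]
          refine mul_le_mul_left (ENNReal.ofReal_le_ofReal ?_) _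
          have : Real.exp (M * s) ≤ Real.exp (M * t) :=
            Real.exp_le_exp.2 (by nlinarith [hs.2])
          calc _ = 2 * N * Real.exp (M * s) * ((xN + (t - s))⁻¹ * s ^ (-(1 : ℝ) / 2)) := by ring
            _ ≤ _ := by gcongr
      _ = ENNReal.ofReal (2 * N * Real.exp (M * t)) * K * ∫⁻ s in Ioo (0 : ℝ) t,
            ENNReal.ofReal ((xN + (t - s))⁻¹ * s ^ (-(1 : ℝ) / 2)) :=
          lintegral_const_mul' _ _ (ENNReal.mul_ne_top ENNReal.ofReal_ne_top hKt)
      _ ≤ ENNReal.ofReal (2 * N * Real.exp (M * t)) * K * _ :=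
          mul_le_mul_right (time_int xN t hx ht0) _
      _ = _ := by
          rw [mul_right_comm, ← ENNReal.ofReal_mul (by positivity)]
  calc bLpNorm N r (fun x' : E' N => Fop N v (x', xN) t)
      ≤ eLpNorm (fun x => H1 x + H2 x) r volume := eLpNorm_mono_enorm hpt
    _ ≤ eLpNorm H1 r volume + eLpNorm H2 r volume :=
        eLpNorm_add_le hH1m.aestronglyMeasurable hH2m.aestronglyMeasurable hr
    _ ≤ _ := add_le_add hb1 hb2
    _ ≤ _ := by
        rw [← add_mul, ← ENNReal.ofReal_add (by positivity) (by positivity)]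
        refine mul_le_mul_left (ENNReal.ofReal_le_ofReal ?_) _
        have : 0 ≤ (xN⁻¹ * t) ^ ((1 : ℝ) / 2) * (t ^ (-(1 : ℝ) / 2) * Real.exp (M * t)) := by
          positivity
        nlinarith

/-- let `1 ≤ q < ∞` and `p ∈ (Nq/(N-1), ∞]`. There exists `C > 0`,
independent of `T` and `M`, such that for all `T > 0`, `M ≥ 1`, `v ∈ X_{T,M}` and any
`r ∈ [q,p]`: `‖F[v](·,x_N,t)‖_{L^r(ℝ^{N-1})} ≤ C (1 + (x_N^{-1} t)^{1/2}) t^{-1/2} e^{Mt}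
‖v‖_{X_{T,M}}` for all `x_N ∈ (0,∞)` and `0 < t < T`. -/
theorem stmt_4 (N : ℕ) (hN : 2 ≤ N) (q p : ℝ≥0∞) (hq1 : 1 ≤ q) (hq2 : q ≠ ∞)
    (hp1 : (N : ℝ≥0∞) * q / ((N : ℝ≥0∞) - 1) < p) :
    ∃ C : ℝ, 0 < C ∧ ∀ T M : ℝ, 0 < T → 1 ≤ M → ∀ v : HS N → ℝ → ℝ,
      memX N q p T M v → ∀ r : ℝ≥0∞, q ≤ r → r ≤ p →
        ∀ xN : ℝ, 0 < xN → ∀ t ∈ Ioo (0 : ℝ) T,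
          bLpNorm N r (fun x' : E' N => Fop N v (x', xN) t) ≤
            ENNReal.ofReal
                (C * (1 + (xN⁻¹ * t) ^ ((1 : ℝ) / 2)) * t ^ (-(1 : ℝ) / 2) *
                  Real.exp (M * t)) *
              XNorm N q p T M v := by
  refine ⟨1 + 8 * N, by positivity, ?_⟩
  intro T M hT hM v hv r hqr hrp xN hx t ht
  have ht0 : 0 < t := ht.1
  set c := ENNReal.ofReal ((1 + 8 * (N : ℝ)) * (1 + (xN⁻¹ * t) ^ ((1 : ℝ) / 2)) *
    t ^ (-(1 : ℝ) / 2) * Real.exp (M * t)) with hc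
  have hc0 : c ≠ 0 := by
    rw [hc, ENNReal.ofReal_ne_zero_iff]
    positivity
  have hct : c ≠ ∞ := ENNReal.ofReal_ne_top
  rw [mul_comm, ← ENNReal.div_le_iff hc0 hct]
  refine le_of_forall_gt_imp_ge_of_dense fun K hK => ?_
  by_cases hKt : K = ∞
  · rw [hKt]; exact le_top
  rw [ENNReal.div_le_iff hc0 hct, mul_comm]
  exact main_aux N hN q p hq1 T M hM v hv r hqr hrp xN hx t ht K hK.le
    (ne_of_gt (lt_of_le_of_lt zero_le hK)) hKt

end
end
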